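/- arXiv:2311.15187 — 3 statements merged into one kernel-verified Lean document; each statement's English description precedes it below -/
import Mathlib

section
/- There exist a group G with a finite generating set T and an element q ∈ G of infinite order such that: the infinite cyclic subgroup K = ⟨q⟩ is stable in G (with respect to T); G is acylindrically hyperbolic (it is not virtually cyclic and admits an acylindrical isometric action with unbounded orbits on a geodesic Gromov hyperbolic metric space); and yet for every geodesic Gromov hyperbolic metric space X, every acylindrical isometric action of G on X, and every basepoint x ∈ X, the orbit map ℤ → X, n ↦ qⁿ·x, is not a quasi-isometric embedding (ℤ carrying its usual metric). In other words, no acylindrical action of G on a hyperbolic space recognizes the stable subgroup ⟨q⟩. -/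
/-!
The group is `G = ⟨B, t, c | [t, C] = 1⟩`, where `B` is the lamplighter group `(ℤ/2) ≀ ℤ²` and `C`
is the subgroup of lamp configurations supported in the region `0 ≤ y < h(x)`, for the slowly
growing height `h(x) = ⌊√|x|⌋`, with the lamplighter at the origin. In other words `G` is the free
product of `⟨c⟩` and the HNN extension of `B` whose stable letter `t` centralizes `C`. The element
is `q = y t`, where `y` is the vertical unit translation of `ℤ²`.

*Not recognized* (`not_recognized`). As `t` commutes with `C`, conjugation by `q` moves a lamp of
the region up by one as long as it stays below the top of its column. Over a far away column, high
compared to `j`, the lamps generate a large finite group `S`. A finite group of isometries of a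
hyperbolic space almost fixes some point `z`, and if `q` had a quasi-isometrically embedded orbit,
`q ^ j` would move `z` far away for `j` large. But many elements of `S` are conjugated by `q ^ j`
into `S`, hence almost fix both `z` and `q⁻ʲ z`, which contradicts acylindricity.

*Stable* (`stable_qq`). Counting `t`-edges which leave a fixed coset of `C` defines a wall for each
such coset (`exists_cocycle`), and the walls of `q ^ k C` separate the two ends of the axis of `q`.
So a path from `1` to `q ^ N` runs close to points `q ^ k b_k` with `b_k ∈ C`, for `k = 0, …, N` in
order. If `b_k` has no far lit lamp, it lies in a finite set and the path is close to `q ^ k`.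
Otherwise a lamp in a far column `x` is lit in `b_k`; as the intersection of `C` with its conjugate
by `q ^ m` has no lamps in that column when `m ≥ h(x)`, this lamp was switched at most `h(x)`
steps earlier and is switched again at most `h(x)` steps later, and each visit to column `x`
costs time `|x|`, which is much more than `h(x)`. A quasi-geodesic can afford this only for a
bounded number of consecutive steps.

*Acylindrically hyperbolic*. The walls dual to single `c`-edges are pairwise nested, so the number
`wd` of walls between two elements satisfies the four-point condition with constant `0`. Walls have
trivial stabilizers, which makes left multiplication acylindrical for `wd` (`wd_acylindrical`). The
real tree spanned by `(G, wd)`, constructed inside the tight span (`TreePt`), is a geodesic space on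
which `G` acts acylindrically with unbounded orbits. Finally `G` is not virtually cyclic, because
it maps onto `ℤ²`.
-/

/-! Common definitions: word metrics, quasi-isometric embeddings, quasi-geodesics,
stability, Gromov hyperbolicity, acylindrical actions, and the free product `H * ℤ`. -/

/-- The word metric on a group `G` with respect to a generating set `A`:
`wordDist A g h` is the least `n` such that `g⁻¹h` is a product of `n` elements
of `A ∪ A⁻¹`. -/
noncomputable def wordDist {G : Type*} [Group G] (A : Set G) (g h : G) : ℕ :=
  sInf {n : ℕ | ∃ l : List G, l.length = n ∧ (∀ x ∈ l, x ∈ A ∪ A⁻¹) ∧ l.prod = g⁻¹ * h}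

/-- `f` is a quasi-isometric embedding of `(X, dX)` into `(Y, dY)`. -/
def IsQIE {X Y : Type*} (dX : X → X → ℝ) (dY : Y → Y → ℝ) (f : X → Y) : Prop :=
  ∃ lam C : ℝ, 1 ≤ lam ∧ 0 ≤ C ∧ ∀ x x' : X,
    lam⁻¹ * dX x x' - C ≤ dY (f x) (f x') ∧ dY (f x) (f x') ≤ lam * dX x x' + C

/-- `σ` is a `(lam, C)`-quasi-geodesic on the integer interval `{0, …, n}`
in the space `X` with distance function `d`. -/
def IsQuasiGeodesicOn {X : Type*} (d : X → X → ℝ) (lam C : ℝ) (σ : ℤ → X) (n : ℤ) : Prop :=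
  ∀ s t : ℤ, 0 ≤ s → s ≤ n → 0 ≤ t → t ≤ n →
    lam⁻¹ * |(s : ℝ) - (t : ℝ)| - C ≤ d (σ s) (σ t) ∧
    d (σ s) (σ t) ≤ lam * |(s : ℝ) - (t : ℝ)| + C

/-- The subgroup `K` of `G` (with generating set `SK` for `K` and `T` for `G`) is stable:
the inclusion is a quasi-isometric embedding, and quasi-geodesics in `G` with common
endpoints in `K` uniformly fellow-travel. -/
def Stable {G : Type*} [Group G] (T : Set G) (K : Subgroup G) (SK : Set K) : Prop :=
  IsQIE (fun a b : K => (wordDist SK a b : ℝ)) (fun a b : G => (wordDist T a b : ℝ))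
    (fun k : K => (k : G)) ∧
  ∀ lam C : ℝ, 1 ≤ lam → 0 ≤ C → ∃ M : ℝ, 0 ≤ M ∧
    ∀ (σ τ : ℤ → G) (n m : ℤ), 0 ≤ n → 0 ≤ m →
      IsQuasiGeodesicOn (fun a b : G => (wordDist T a b : ℝ)) lam C σ n →
      IsQuasiGeodesicOn (fun a b : G => (wordDist T a b : ℝ)) lam C τ m →
      σ 0 = τ 0 → σ n = τ m → σ 0 ∈ K → σ n ∈ K →
      (∀ i : ℤ, 0 ≤ i → i ≤ n → ∃ j : ℤ, 0 ≤ j ∧ j ≤ m ∧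
        (wordDist T (σ i) (τ j) : ℝ) ≤ M) ∧
      (∀ j : ℤ, 0 ≤ j → j ≤ m → ∃ i : ℤ, 0 ≤ i ∧ i ≤ n ∧
        (wordDist T (τ j) (σ i) : ℝ) ≤ M)

/-- The four-point condition: `(X, d)` is Gromov hyperbolic. -/
def GromovHyperbolicD {X : Type*} (d : X → X → ℝ) : Prop :=
  ∃ δ : ℝ, 0 ≤ δ ∧ ∀ w x y z : X,
    d w x + d y z ≤ max (d w y + d x z) (d w z + d x y) + 2 * δ

/-- The left-multiplication action of `G` on itself with distance function `d`
is acylindrical. -/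
def AcylindricalLeftMul {G : Type*} [Group G] (d : G → G → ℝ) : Prop :=
  ∀ R : ℝ, 0 ≤ R → ∃ (N : ℕ) (L : ℝ), 0 < N ∧ 0 < L ∧
    ∀ x y : G, L ≤ d x y →
      {g : G | d x (g * x) ≤ R ∧ d y (g * y) ≤ R}.Finite ∧
      {g : G | d x (g * x) ≤ R ∧ d y (g * y) ≤ R}.ncard ≤ N

/-- `φ` is an isometric action of the group `G` on the metric space `X`. -/
def IsIsometricAction {G X : Type*} [Group G] [MetricSpace X] (φ : G → X → X) : Prop :=
  (∀ x : X, φ 1 x = x) ∧ (∀ g h : G, ∀ x : X, φ (g * h) x = φ g (φ h x)) ∧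
    (∀ g : G, ∀ x y : X, dist (φ g x) (φ g y) = dist x y)

/-- The action `φ` of `G` on the metric space `X` is acylindrical. -/
def AcylindricalAction {G X : Type*} [Group G] [MetricSpace X] (φ : G → X → X) : Prop :=
  ∀ R : ℝ, 0 ≤ R → ∃ (N : ℕ) (L : ℝ), 0 < N ∧ 0 < L ∧
    ∀ x y : X, L ≤ dist x y →
      {g : G | dist x (φ g x) ≤ R ∧ dist y (φ g y) ≤ R}.Finite ∧
      {g : G | dist x (φ g x) ≤ R ∧ dist y (φ g y) ≤ R}.ncard ≤ N

/-- A metric space is geodesic if any two points are joined by a geodesic. -/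
def GeodesicSpace (X : Type*) [MetricSpace X] : Prop :=
  ∀ x y : X, ∃ γ : ℝ → X, γ 0 = x ∧ γ (dist x y) = y ∧
    ∀ s t : ℝ, s ∈ Set.Icc 0 (dist x y) → t ∈ Set.Icc 0 (dist x y) →
      dist (γ s) (γ t) = |s - t|

/-- A group is virtually cyclic if it has a cyclic subgroup of finite index. -/
def VirtuallyCyclic (G : Type*) [Group G] : Prop :=
  ∃ K : Subgroup G, IsCyclic ↥K ∧ K.index ≠ 0

/-- The free product `H * ℤ`. -/
abbrev FPZ (H : Type*) [Group H] : Type _ := Monoid.Coprod H (Multiplicative ℤ)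

/-- The canonical embedding `H →* H * ℤ`. -/
def fpzInl (H : Type*) [Group H] : H →* FPZ H := Monoid.Coprod.inl

/-- The generator `y` of the `ℤ` factor of `H * ℤ`. -/
def fpzY (H : Type*) [Group H] : FPZ H := Monoid.Coprod.inr (Multiplicative.ofAdd 1)

/-! ### Word metrics -/

section WordMetric

variable {G : Type*} [Group G] {T : Set G}

lemma wordDist_le_length {x y : G} (l : List G) (hl : ∀ s ∈ l, s ∈ T ∪ T⁻¹)
    (h : l.prod = x⁻¹ * y) : wordDist T x y ≤ l.length :=
  Nat.sInf_le ⟨l, rfl, hl, h⟩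

lemma exists_word (hT : Subgroup.closure T = ⊤) (x y : G) :
    ∃ l : List G, l.length = wordDist T x y ∧ (∀ s ∈ l, s ∈ T ∪ T⁻¹) ∧ l.prod = x⁻¹ * y := by
  have h : {n : ℕ | ∃ l : List G, l.length = n ∧ (∀ s ∈ l, s ∈ T ∪ T⁻¹) ∧
      l.prod = x⁻¹ * y}.Nonempty := by
    have hmem : x⁻¹ * y ∈ Subgroup.closure T := hT ▸ Subgroup.mem_top _
    rw [← Subgroup.mem_toSubmonoid, Subgroup.closure_toSubmonoid] at hmem
    obtain ⟨l, hl, hp⟩ := Submonoid.exists_list_of_mem_closure hmem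
    exact ⟨l.length, l, rfl, hl, hp⟩
  exact Nat.sInf_mem h

lemma wordDist_self (x : G) : wordDist T x x = 0 :=
  Nat.le_zero.1 (wordDist_le_length [] (by simp) (by simp))

lemma wordDist_mul_left (g x y : G) : wordDist T (g * x) (g * y) = wordDist T x y := by
  unfold wordDist
  simp [mul_assoc]

lemma wordDist_triangle (hT : Subgroup.closure T = ⊤) (x y z : G) :
    wordDist T x z ≤ wordDist T x y + wordDist T y z := by
  obtain ⟨l, h1, h2, h3⟩ := exists_word hT x y
  obtain ⟨m, k1, k2, k3⟩ := exists_word hT y z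
  rw [← h1, ← k1, ← List.length_append]
  refine wordDist_le_length _ (fun s hs => ?_) (by simp [h3, k3, mul_assoc])
  rcases List.mem_append.1 hs with hs | hs
  exacts [h2 s hs, k2 s hs]

lemma wordDist_le_swap (hT : Subgroup.closure T = ⊤) (x y : G) :
    wordDist T y x ≤ wordDist T x y := by
  obtain ⟨l, h1, h2, h3⟩ := exists_word hT x y
  have : (l.map (·⁻¹)).reverse.length = wordDist T x y := by simp [h1]
  rw [← this]
  refine wordDist_le_length _ (fun s hs => ?_) ?_
  · simp only [List.mem_reverse, List.mem_map] at hs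
    obtain ⟨r, hr, rfl⟩ := hs
    have := h2 r hr
    simp only [Set.mem_union, Set.mem_inv, inv_inv] at this ⊢
    tauto
  · rw [← List.prod_inv_reverse, h3]; simp

lemma wordDist_comm (hT : Subgroup.closure T = ⊤) (x y : G) :
    wordDist T x y = wordDist T y x :=
  le_antisymm (wordDist_le_swap hT y x) (wordDist_le_swap hT x y)

lemma eq_of_wordDist_eq_zero (hT : Subgroup.closure T = ⊤) {x y : G} (h : wordDist T x y = 0) :
    x = y := by
  obtain ⟨l, h1, -, h3⟩ := exists_word hT x y
  rw [h, List.length_eq_zero_iff] at h1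
  subst h1
  simp only [List.prod_nil] at h3
  exact (inv_mul_eq_one.1 h3.symm)

lemma wordDist_mul_right_le {s : G} (hs : s ∈ T) (x : G) : wordDist T x (x * s) ≤ 1 :=
  wordDist_le_length [s] (by simp [hs]) (by simp)

lemma wordDist_mul_inv_right_le {s : G} (hs : s ∈ T) (x : G) : wordDist T x (x * s⁻¹) ≤ 1 :=
  wordDist_le_length [s⁻¹] (by simp [hs]) (by simp)

/-- The first step of a geodesic word. -/
lemma exists_first_step (hT : Subgroup.closure T = ⊤) {x y : G} {n : ℕ}
    (h : wordDist T x y = n + 1) :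
    ∃ s ∈ T, wordDist T (x * s) y = n ∨ wordDist T (x * s⁻¹) y = n := by
  obtain ⟨l, h1, h2, h3⟩ := exists_word hT x y
  rw [h] at h1
  match l, h1, h2, h3 with
  | s :: l, h1, h2, h3 =>
    have hl : wordDist T (x * s) y ≤ n := by
      rw [← Nat.succ.inj h1]
      refine wordDist_le_length l (fun r hr => h2 r (by simp [hr])) ?_
      rw [List.prod_cons] at h3
      rw [mul_inv_rev, mul_assoc, ← h3]; simp
    have hs : s ∈ T ∪ T⁻¹ := h2 s (by simp)
    rcases hs with hs | hs
    · have := wordDist_triangle hT x (x * s) y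
      have := wordDist_mul_right_le hs x
      exact ⟨s, hs, Or.inl (by omega)⟩
    · have hs' : s⁻¹ ∈ T := hs
      have := wordDist_triangle hT x (x * s) y
      have h4 := wordDist_mul_inv_right_le hs' x
      rw [inv_inv] at h4
      exact ⟨s⁻¹, hs', Or.inr (by rw [inv_inv]; omega)⟩

/-- A subadditive bound on generators propagates along words: the quantity `P n g`,
to be read as a bound by `n` on some size of `g`, holds with `n` the word length of `g`. -/
lemma word_induction (hT : Subgroup.closure T = ⊤) {P : ℕ → G → Prop} (h0 : P 0 1)
    (hs : ∀ s ∈ T, ∀ n g, P n g → P (n + 1) (s * g) ∧ P (n + 1) (s⁻¹ * g)) (g : G) :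
    P (wordDist T 1 g) g := by
  obtain ⟨l, h1, h2, h3⟩ := exists_word hT 1 g
  rw [inv_one, one_mul] at h3
  rw [← h1, ← h3]
  clear h1 h3
  induction l with
  | nil => simpa using h0
  | cons s l ih =>
    rw [List.prod_cons, List.length_cons]
    have ih' := ih (fun r hr => h2 r (by simp [hr]))
    rcases h2 s (by simp) with h | h
    · exact (hs s h _ _ ih').1
    · have := (hs _ h _ _ ih').2
      rwa [inv_inv] at this

/-- If `u` changes only along edges `z — z * t`, and by `I z` there, then any geodesic word between
points with different values of `u` runs through both ends of an edge with `I z ≠ 0`. -/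
lemma exists_crossing (hT : Subgroup.closure T = ⊤) {t : G} {u I : G → ℤ}
    (hu : ∀ s ∈ T, s ≠ t → ∀ x, u (x * s) = u x) (ht : ∀ x, u (x * t) = u x + I x)
    (htT : t ∈ T) {x y : G} (h : u x ≠ u y) :
    ∃ z, I z ≠ 0 ∧ wordDist T x z ≤ wordDist T x y ∧ wordDist T z y ≤ wordDist T x y ∧
      wordDist T (z * t) y ≤ wordDist T x y := by
  obtain ⟨n, hn⟩ : ∃ n, wordDist T x y = n := ⟨_, rfl⟩
  induction n generalizing x with
  | zero => exact absurd (congrArg u (eq_of_wordDist_eq_zero hT hn)) h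
  | succ n ih =>
    obtain ⟨s, hs, hd⟩ := exists_first_step hT hn
    have key : ∀ x', wordDist T x x' ≤ 1 → wordDist T x' y = n → u x = u x' →
        ∃ z, I z ≠ 0 ∧ wordDist T x z ≤ wordDist T x y ∧ wordDist T z y ≤ wordDist T x y ∧
          wordDist T (z * t) y ≤ wordDist T x y := by
      intro x' h1 h2 h3
      obtain ⟨z, k1, k2, k3, k4⟩ := ih (x := x') (by rwa [← h3]) h2
      have := wordDist_triangle hT x x' z
      exact ⟨z, k1, by omega, by omega, by omega⟩
    rcases hd with hd | hd
    · have h1 := wordDist_mul_right_le hs x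
      by_cases hst : s = t
      · subst hst
        by_cases hI : I x = 0
        · exact key _ h1 hd (by rw [ht, hI, add_zero])
        · exact ⟨x, hI, by rw [wordDist_self]; omega, by omega, by omega⟩
      · exact key _ h1 hd (hu s hs hst x).symm
    · have h1 := wordDist_mul_inv_right_le hs x
      by_cases hst : s = t
      · subst hst
        have h2 := ht (x * s⁻¹)
        rw [inv_mul_cancel_right] at h2
        by_cases hI : I (x * s⁻¹) = 0
        · exact key _ h1 hd (by rw [h2, hI, add_zero])
        · refine ⟨x * s⁻¹, hI, by omega, by omega, ?_⟩
          rw [inv_mul_cancel_right]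
      · have h2 := hu s hs hst (x * s⁻¹)
        rw [inv_mul_cancel_right] at h2
        exact key _ h1 hd h2

end WordMetric

/-! ### The group -/

/-- The ambient lamplighter group `(ℤ/2) ≀ ℤ²`. -/
abbrev LampW : Type :=
  RegularWreathProduct (Multiplicative (ZMod 2)) (Multiplicative (ℤ × ℤ))

/-- The element switching the lamp at the origin. -/
def lampA : LampW := ⟨Pi.mulSingle 1 (Multiplicative.ofAdd 1), 1⟩

/-- The translation of the lamplighter by `(x, y)`. -/
def lampShift (x y : ℤ) : LampW := ⟨1, Multiplicative.ofAdd (x, y)⟩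

/-- The finitely generated lamplighter group on `ℤ²`: configurations of finitely many lit lamps
together with a position. -/
def BB : Subgroup LampW := Subgroup.closure {lampA, lampShift 1 0, lampShift 0 1}

/-- The lamp at `(x, y)` is lit in `b`. -/
def Lit (b : BB) (x y : ℤ) : Prop := b.1.left (Multiplicative.ofAdd (x, y)) ≠ 1

/-- The first coordinate of the lamplighter's position. -/
def posx (b : BB) : ℤ := (Multiplicative.toAdd b.1.right).1

/-- The second coordinate of the lamplighter's position. -/
def posy (b : BB) : ℤ := (Multiplicative.toAdd b.1.right).2

/-- The height of the column over `x` of the region carrying the lamps of `CC`. Any function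
which tends to infinity sublinearly would do. -/
def colHeight (x : ℤ) : ℤ := (Nat.sqrt x.natAbs : ℤ)

lemma BB_right_ext {b b' : BB} (hx : posx b = posx b') (hy : posy b = posy b') :
    b.1.right = b'.1.right := by
  apply Multiplicative.toAdd.injective
  exact Prod.ext hx hy

lemma posx_mul (b b' : BB) : posx (b * b') = posx b + posx b' := rfl
lemma posy_mul (b b' : BB) : posy (b * b') = posy b + posy b' := rfl
lemma posx_inv (b : BB) : posx b⁻¹ = -posx b := rfl
lemma posy_inv (b : BB) : posy b⁻¹ = -posy b := rfl
lemma posx_one : posx 1 = 0 := rfl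
lemma posy_one : posy 1 = 0 := rfl

lemma left_mul_apply (b b' : BB) (x y : ℤ) :
    (b * b').1.left (Multiplicative.ofAdd (x, y)) =
      b.1.left (Multiplicative.ofAdd (x, y)) *
        b'.1.left (Multiplicative.ofAdd (x - posx b, y - posy b)) := by
  have : (b * b').1 = b.1 * b'.1 := rfl
  rw [this, RegularWreathProduct.mul_left, Pi.mul_apply]
  congr 2
  apply Multiplicative.toAdd.injective
  ext
  · change -posx b + x = x - posx b
    ring
  · change -posy b + y = y - posy b
    ring

lemma left_inv_apply (b : BB) (x y : ℤ) :
    b⁻¹.1.left (Multiplicative.ofAdd (x, y)) =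
      (b.1.left (Multiplicative.ofAdd (x + posx b, y + posy b)))⁻¹ := by
  have : b⁻¹.1 = b.1⁻¹ := rfl
  rw [this, RegularWreathProduct.inv_left]
  beta_reduce
  rw [Pi.inv_apply]
  congr 2
  apply Multiplicative.toAdd.injective
  ext
  · change posx b + x = x + posx b
    ring
  · change posy b + y = y + posy b
    ring

lemma not_lit_one (x y : ℤ) : ¬ Lit 1 x y := by simp [Lit]

lemma lit_mul {b b' : BB} {x y : ℤ} (h : Lit (b * b') x y) :
    Lit b x y ∨ Lit b' (x - posx b) (y - posy b) := by
  by_contra! hc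
  simp only [Lit, not_not] at hc
  exact h (by rw [left_mul_apply, hc.1, hc.2, one_mul])

lemma lit_mul_of_left {b b' : BB} {x y : ℤ} (h : Lit b x y)
    (h' : ¬ Lit b' (x - posx b) (y - posy b)) : Lit (b * b') x y := by
  simp only [Lit, not_not] at h'
  rwa [Lit, left_mul_apply, h', mul_one]

lemma lit_mul_of_right {b b' : BB} {x y : ℤ} (h : ¬ Lit b x y)
    (h' : Lit b' (x - posx b) (y - posy b)) : Lit (b * b') x y := by
  simp only [Lit, not_not] at h
  rwa [Lit, left_mul_apply, h, one_mul]

lemma lit_inv {b : BB} {x y : ℤ} : Lit b⁻¹ x y ↔ Lit b (x + posx b) (y + posy b) := by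
  rw [Lit, left_inv_apply, Lit, Ne, inv_eq_one]

/-- The subgroup of lamp configurations supported in the region `0 ≤ y < colHeight x`, with the
lamplighter at the origin. -/
def CC : Subgroup BB where
  carrier := {b | posx b = 0 ∧ posy b = 0 ∧ ∀ x y, Lit b x y → 0 ≤ y ∧ y < colHeight x}
  one_mem' := ⟨rfl, rfl, fun x y h => absurd h (not_lit_one x y)⟩
  mul_mem' := by
    rintro b b' ⟨h1, h2, h3⟩ ⟨k1, k2, k3⟩
    refine ⟨by simp [posx_mul, h1, k1], by simp [posy_mul, h2, k2], fun x y h => ?_⟩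
    rcases lit_mul h with h | h
    · exact h3 x y h
    · rw [h1, h2, sub_zero, sub_zero] at h
      exact k3 x y h
  inv_mem' := by
    rintro b ⟨h1, h2, h3⟩
    refine ⟨by simp [posx_inv, h1], by simp [posy_inv, h2], fun x y h => ?_⟩
    rw [lit_inv, h1, h2, add_zero, add_zero] at h
    exact h3 x y h

lemma mem_CC {b : BB} :
    b ∈ CC ↔ posx b = 0 ∧ posy b = 0 ∧ ∀ x y, Lit b x y → 0 ≤ y ∧ y < colHeight x := Iff.rfl

/-- The group of the theorem: `⟨BB, t, c | [t, CC] = 1⟩`. -/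
def GG : Type := FPZ (HNNExtension BB CC CC (MulEquiv.refl _))

noncomputable instance : Group GG :=
  inferInstanceAs (Group (FPZ (HNNExtension BB CC CC (MulEquiv.refl _))))

/-- The inclusion of the lamplighter group. -/
noncomputable def incl : BB →* GG :=
  (fpzInl (HNNExtension BB CC CC (MulEquiv.refl _))).comp HNNExtension.of

/-- The stable letter `t`. -/
noncomputable def tt : GG := fpzInl (HNNExtension BB CC CC (MulEquiv.refl _)) HNNExtension.t

/-- The free letter `c`. -/
noncomputable def cc : GG := fpzY (HNNExtension BB CC CC (MulEquiv.refl _))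

lemma tt_comm {b : BB} (hb : b ∈ CC) : tt * incl b = incl b * tt := by
  have h := congrArg (fpzInl (HNNExtension BB CC CC (MulEquiv.refl _)))
    (HNNExtension.t_mul_of (φ := MulEquiv.refl CC) ⟨b, hb⟩)
  rw [map_mul, map_mul] at h
  exact h

/-- The universal property of `GG`. -/
noncomputable def liftGG {Q : Type*} [Group Q] (f : BB →* Q) (τ κ : Q)
    (h : ∀ b ∈ CC, τ * f b = f b * τ) : GG →* Q :=
  Monoid.Coprod.lift (HNNExtension.lift f τ (fun a => h a a.2)) (zpowersHom Q κ)

section lift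
variable {Q : Type*} [Group Q] (f : BB →* Q) (τ κ : Q) (h : ∀ b ∈ CC, τ * f b = f b * τ)

@[simp] lemma liftGG_incl (b : BB) : liftGG f τ κ h (incl b) = f b :=
  (Monoid.Coprod.lift_apply_inl _ _ _).trans (HNNExtension.lift_of _ _ _ _)

@[simp] lemma liftGG_tt : liftGG f τ κ h tt = τ :=
  (Monoid.Coprod.lift_apply_inl _ _ _).trans (HNNExtension.lift_t _ _ _)

@[simp] lemma liftGG_cc : liftGG f τ κ h cc = κ :=
  (Monoid.Coprod.lift_apply_inr _ _ _).trans (by simp)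
end lift

lemma GG_induction {P : GG → Prop} (hb : ∀ b, P (incl b)) (ht : P tt) (hc : P cc)
    (hm : ∀ x y, P x → P y → P (x * y)) (hi : ∀ x, P x → P x⁻¹) (g : GG) : P g := by
  have hone : P 1 := by simpa using hb 1
  refine Monoid.Coprod.induction_on (motive := P) g (fun m => ?_) (fun n => ?_) hm
  · exact HNNExtension.induction_on (motive := fun m => P (fpzInl _ m)) m hb ht
      (fun x y hx hy => by rw [map_mul]; exact hm _ _ hx hy)
      (fun x hx => by rw [map_inv]; exact hi _ hx)
  · have : (Monoid.Coprod.inr n : GG) = cc ^ (Multiplicative.toAdd n) := by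
      have h : (Monoid.Coprod.inr n : FPZ (HNNExtension BB CC CC (MulEquiv.refl _))) =
          Monoid.Coprod.inr (Multiplicative.ofAdd (1 : ℤ)) ^ (Multiplicative.toAdd n) := by
        rw [← map_zpow, ← ofAdd_zsmul]
        simp
      exact h
    rw [this]
    have hn : ∀ k : ℕ, P (cc ^ k) := fun k => by
      induction k with
      | zero => simpa using hone
      | succ k ih => rw [pow_succ]; exact hm _ _ ih hc
    rcases Int.eq_nat_or_neg (Multiplicative.toAdd n) with ⟨k, hk | hk⟩
    · rw [hk, zpow_natCast]; exact hn k
    · rw [hk, zpow_neg, zpow_natCast]; exact hi _ (hn k)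

lemma GG_hom_ext {Q : Type*} [Group Q] {f f' : GG →* Q} (hb : ∀ b, f (incl b) = f' (incl b))
    (ht : f tt = f' tt) (hc : f cc = f' cc) (g : GG) : f g = f' g := by
  refine GG_induction (P := fun g => f g = f' g) hb ht hc (fun x y hx hy => ?_)
    (fun x hx => ?_) g
  · rw [map_mul, map_mul, hx, hy]
  · rw [map_inv, map_inv, hx]

lemma lampA_mem : lampA ∈ BB := Subgroup.subset_closure (by simp)
lemma lampShift_one_zero_mem : lampShift 1 0 ∈ BB := Subgroup.subset_closure (by simp)
lemma lampShift_zero_one_mem : lampShift 0 1 ∈ BB := Subgroup.subset_closure (by simp)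

/-- The lamp switch at the origin. -/
def ga : BB := ⟨lampA, lampA_mem⟩
/-- The horizontal unit shift. -/
def gx : BB := ⟨lampShift 1 0, lampShift_one_zero_mem⟩
/-- The vertical unit shift. -/
def gy : BB := ⟨lampShift 0 1, lampShift_zero_one_mem⟩

/-- The finite generating set. -/
def TT : Set GG := {incl ga, incl gx, incl gy, tt, cc}

/-- The element generating the stable subgroup. -/
noncomputable def qq : GG := incl gy * tt

lemma TT_finite : TT.Finite := by simp [TT]

lemma BB_closure : Subgroup.closure ({ga, gx, gy} : Set BB) = ⊤ := by
  have := Subgroup.closure_closure_coe_preimage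
    (k := ({lampA, lampShift 1 0, lampShift 0 1} : Set LampW))
  refine Eq.trans ?_ this
  congr 1
  ext b
  simp only [Set.mem_insert_iff, Set.mem_singleton_iff, ga, gx, gy, Subtype.ext_iff]
  rfl

lemma TT_closure : Subgroup.closure TT = ⊤ := by
  rw [eq_top_iff]
  rintro g -
  refine GG_induction (P := fun g => g ∈ Subgroup.closure TT) (fun b => ?_) ?_ ?_
    (fun x y => mul_mem) (fun x => inv_mem) g
  · have hb : b ∈ Subgroup.closure ({ga, gx, gy} : Set BB) := BB_closure ▸ Subgroup.mem_top b
    induction hb using Subgroup.closure_induction with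
    | mem x hx =>
      apply Subgroup.subset_closure
      rcases hx with rfl | rfl | rfl <;> simp [TT]
    | one => simp
    | mul x y _ _ hx hy => rw [map_mul]; exact mul_mem hx hy
    | inv x _ hx => rw [map_inv]; exact inv_mem hx
  · exact Subgroup.subset_closure (by simp [TT])
  · exact Subgroup.subset_closure (by simp [TT])

/-- The retraction of `GG` onto the lamplighter group killing `t` and `c`. -/
noncomputable def rho : GG →* BB := liftGG (MonoidHom.id BB) 1 1 (by simp)

@[simp] lemma rho_incl (b : BB) : rho (incl b) = b := liftGG_incl _ _ _ _ b
@[simp] lemma rho_tt : rho tt = 1 := liftGG_tt _ _ _ _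
@[simp] lemma rho_cc : rho cc = 1 := liftGG_cc _ _ _ _

lemma incl_injective : Function.Injective incl := fun b b' h => by
  simpa using congrArg rho h

/-- The exponent sum of `t`. -/
noncomputable def tExp : GG →* Multiplicative ℤ := liftGG 1 (Multiplicative.ofAdd 1) 1 (by simp)

/-- The exponent sum of `c`. -/
noncomputable def cExp : GG →* Multiplicative ℤ := liftGG 1 1 (Multiplicative.ofAdd 1) (by simp)

@[simp] lemma tExp_incl (b : BB) : tExp (incl b) = 1 := liftGG_incl _ _ _ _ b
@[simp] lemma tExp_tt : tExp tt = Multiplicative.ofAdd 1 := liftGG_tt _ _ _ _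
@[simp] lemma tExp_cc : tExp cc = 1 := liftGG_cc _ _ _ _
@[simp] lemma cExp_incl (b : BB) : cExp (incl b) = 1 := liftGG_incl _ _ _ _ b
@[simp] lemma cExp_tt : cExp tt = 1 := liftGG_tt _ _ _ _
@[simp] lemma cExp_cc : cExp cc = Multiplicative.ofAdd 1 := liftGG_cc _ _ _ _

lemma tExp_qq_zpow (n : ℤ) : Multiplicative.toAdd (tExp (qq ^ n)) = n := by
  simp [qq]

lemma rho_qq_zpow (n : ℤ) : rho (qq ^ n) = gy ^ n := by
  simp [qq]

lemma qq_not_finOrder : ¬ IsOfFinOrder qq := by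
  intro h
  obtain ⟨n, hn, h⟩ := isOfFinOrder_iff_pow_eq_one.1 h
  have := tExp_qq_zpow n
  rw [zpow_natCast, h] at this
  simp at this
  omega

/-- The two exponent sums are independent, so `GG` maps onto `ℤ²`. -/
lemma not_virtuallyCyclic : ¬ VirtuallyCyclic GG := by
  rintro ⟨K, hK, hi⟩
  obtain ⟨⟨g, hg⟩, hgen⟩ := hK.exists_generator
  obtain ⟨n, hn, -, h1⟩ := Subgroup.exists_pow_mem_of_index_ne_zero hi tt
  obtain ⟨m, hm, -, h2⟩ := Subgroup.exists_pow_mem_of_index_ne_zero hi cc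
  obtain ⟨i, hi⟩ := hgen ⟨_, h1⟩
  obtain ⟨j, hj⟩ := hgen ⟨_, h2⟩
  have hi : g ^ i = tt ^ n := congrArg Subtype.val hi
  have hj : g ^ j = cc ^ m := congrArg Subtype.val hj
  have e1 := congrArg (fun g => Multiplicative.toAdd (tExp g)) hi
  have e2 := congrArg (fun g => Multiplicative.toAdd (cExp g)) hi
  have e3 := congrArg (fun g => Multiplicative.toAdd (tExp g)) hj
  have e4 := congrArg (fun g => Multiplicative.toAdd (cExp g)) hj
  simp at e1 e2 e3 e4
  rcases e2 with rfl | e2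
  · simp at e1; omega
  · simp [e2] at e4; omega

/-! ### Cocycles -/

/-- A function on `GG` with prescribed increments along the `t`- and `c`-edges, and no increment
along the edges of the lamplighter group, exists as soon as the increments are compatible with the
relations `[t, CC] = 1`. It is read off from a homomorphism to the wreath product `ℤ ≀ GG`. -/
lemma exists_cocycle (I J : GG → ℤ) (hI : ∀ b ∈ CC, ∀ x, I (x * incl b) = I x) :
    ∃ u : GG → ℤ, u 1 = 0 ∧ (∀ x b, u (x * incl b) = u x) ∧ (∀ x, u (x * tt) = u x + I x) ∧
      ∀ x, u (x * cc) = u x + J x := by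
  let f : BB →* RegularWreathProduct (Multiplicative ℤ) GG := RegularWreathProduct.inl.comp incl
  let F : (GG → ℤ) → GG → RegularWreathProduct (Multiplicative ℤ) GG :=
    fun I t => ⟨fun x => Multiplicative.ofAdd (I x⁻¹), t⟩
  have hc : ∀ b ∈ CC, F I tt * f b = f b * F I tt := by
    intro b hb
    apply RegularWreathProduct.ext
    · funext x
      simp [f, F, hI b hb]
    · simp [f, F, tt_comm hb]
  let Φ := liftGG f (F I tt) (F J cc) hc
  have hr : ∀ x, (Φ x).right = x := by
    intro x
    exact GG_hom_ext (f := RegularWreathProduct.rightHom.comp Φ) (f' := MonoidHom.id _)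
      (by simp [Φ, f]) (by simp [Φ, F]) (by simp [Φ, F]) x
  refine ⟨fun x => Multiplicative.toAdd ((Φ x).left 1), by simp, fun x b => ?_, fun x => ?_,
    fun x => ?_⟩
  · simp [Φ, f]
  · simp only [map_mul, RegularWreathProduct.mul_left, Pi.mul_apply, hr, toAdd_mul]
    simp [Φ, F]
  · simp only [map_mul, RegularWreathProduct.mul_left, Pi.mul_apply, hr, toAdd_mul]
    simp [Φ, F]

/-! ### Lower bounds for word length from lamps -/

lemma lit_ga {x y : ℤ} : Lit ga x y ↔ x = 0 ∧ y = 0 := by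
  simp only [Lit, ga, lampA]
  by_cases h : (Multiplicative.ofAdd (x, y)) = 1
  · have h' : (x, y) = (0, 0) := h
    rw [Prod.mk.injEq] at h'
    rw [h, Pi.mulSingle_eq_same]
    simp only [h'.1, h'.2, and_self, iff_true]
    decide
  · rw [Pi.mulSingle_eq_of_ne h]
    have h' : ¬ (x, y) = (0, 0) := h
    rw [Prod.mk.injEq] at h'
    simp [h']

lemma not_lit_gx (x y : ℤ) : ¬ Lit gx x y := by simp [Lit, gx, lampShift]
lemma not_lit_gy (x y : ℤ) : ¬ Lit gy x y := by simp [Lit, gy, lampShift]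
lemma posx_ga : posx ga = 0 := rfl
lemma posy_ga : posy ga = 0 := rfl
lemma posx_gx : posx gx = 1 := rfl
lemma posy_gx : posy gx = 0 := rfl
lemma posx_gy : posx gy = 0 := rfl
lemma posy_gy : posy gy = 1 := rfl

/-- To light a lamp in column `x`, the lamplighter has to walk there. -/
lemma lit_le_wordDist (g : GG) {x y : ℤ} (h : Lit (rho g) x y) : |x| ≤ wordDist TT 1 g := by
  suffices H : ∀ x y, Lit (rho g) x y → |x| ≤ (wordDist TT 1 g : ℕ) from H x y h
  refine word_induction TT_closure (P := fun n g => ∀ x y, Lit (rho g) x y → |x| ≤ (n : ℤ))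
    (fun x y h => absurd h (by simpa using not_lit_one x y)) ?_ g
  intro s hs n g ih
  have key : ∀ b : BB, |posx b| ≤ 1 → (∀ x y, Lit b x y → |x| ≤ 1) →
      ∀ x y, Lit (b * rho g) x y → |x| ≤ ((n + 1 : ℕ) : ℤ) := by
    intro b hb hl x y h
    push_cast
    rcases lit_mul h with h | h
    · have := hl x y h
      omega
    · have := ih _ _ h
      rw [abs_le] at *
      omega
  have key2 : |posx (rho s)| ≤ 1 ∧ (∀ x y, Lit (rho s) x y → |x| ≤ 1) ∧
      |posx (rho s)⁻¹| ≤ 1 ∧ (∀ x y, Lit (rho s)⁻¹ x y → |x| ≤ 1) := by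
    simp only [lit_inv, posx_inv]
    rcases hs with rfl | rfl | rfl | rfl | rfl
    · simp only [rho_incl, lit_ga, posx_ga, posy_ga]
      refine ⟨by simp, ?_, by simp, ?_⟩ <;> rintro x y ⟨h, -⟩ <;> simp_all
    · simp [not_lit_gx, posx_gx]
    · simp [not_lit_gy, posx_gy]
    · simp [not_lit_one, posx_one]
    · simp [not_lit_one, posx_one]
  constructor
  · rw [map_mul]
    exact key _ key2.1 key2.2.1
  · rw [map_mul, map_inv]
    exact key _ key2.2.2.1 key2.2.2.2

/-! ### Configurations of lamps in a bounded region -/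

lemma BB_ext {b b' : BB} (hx : posx b = posx b') (hy : posy b = posy b')
    (hl : ∀ x y, b.1.left (Multiplicative.ofAdd (x, y)) = b'.1.left (Multiplicative.ofAdd (x, y))) :
    b = b' := by
  apply Subtype.ext
  apply RegularWreathProduct.ext
  · funext p
    exact hl (Multiplicative.toAdd p).1 (Multiplicative.toAdd p).2
  · exact BB_right_ext hx hy

lemma finite_box (m : ℤ) :
    {b : BB | posx b = 0 ∧ posy b = 0 ∧ ∀ x y, Lit b x y → |x| ≤ m ∧ |y| ≤ m}.Finite := by
  let F : BB → (Set.Icc (-m) m × Set.Icc (-m) m → Multiplicative (ZMod 2)) :=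
    fun b p => b.1.left (Multiplicative.ofAdd ((p.1 : ℤ), (p.2 : ℤ)))
  have : Finite (Multiplicative (ZMod 2)) := inferInstanceAs (Finite (ZMod 2))
  refine Set.Finite.of_finite_image (f := F) (Set.toFinite _) ?_
  rintro b ⟨h1, h2, h3⟩ b' ⟨k1, k2, k3⟩ hF
  refine BB_ext (h1.trans k1.symm) (h2.trans k2.symm) fun x y => ?_
  by_cases hb : |x| ≤ m ∧ |y| ≤ m
  · exact congrFun hF (⟨x, abs_le.1 hb.1⟩, ⟨y, abs_le.1 hb.2⟩)
  · have e1 : ¬ Lit b x y := fun h => hb (h3 x y h)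
    have e2 : ¬ Lit b' x y := fun h => hb (k3 x y h)
    simp only [Lit, not_not] at e1 e2
    rw [e1, e2]

lemma colHeight_nonneg (x : ℤ) : 0 ≤ colHeight x := Int.natCast_nonneg _

lemma colHeight_sq_le (x : ℤ) : colHeight x * colHeight x ≤ |x| := by
  have := Nat.sqrt_le x.natAbs
  rw [colHeight, Int.abs_eq_natAbs]
  exact_mod_cast this

lemma colHeight_le_abs (x : ℤ) : colHeight x ≤ |x| := by
  have := Nat.sqrt_le_self x.natAbs
  rw [colHeight, Int.abs_eq_natAbs]
  exact_mod_cast this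

lemma le_colHeight {x s : ℤ} (hs : 0 ≤ s) (h : s * s ≤ |x|) : s ≤ colHeight x := by
  lift s to ℕ using hs
  rw [Int.abs_eq_natAbs] at h
  have hsq : s * s ≤ x.natAbs := by exact_mod_cast h
  rw [colHeight]
  exact_mod_cast Nat.le_sqrt.2 hsq

/-- The height of the region is sublinear. -/
lemma colHeight_sublinear (K R : ℝ) (hK : 0 ≤ K) (hR : 0 ≤ R) :
    ∃ x₀ : ℤ, 0 < x₀ ∧ ∀ x : ℤ, x₀ ≤ |x| → K * colHeight x + R ≤ |(x : ℝ)| := by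
  obtain ⟨S, hS⟩ := exists_nat_ge (K + R + 1)
  have hS1 : (1 : ℝ) ≤ S := by linarith
  have hS2 : 0 < S := by exact_mod_cast (lt_of_lt_of_le one_pos hS1)
  refine ⟨(S : ℤ) * S, by positivity, fun x hx => ?_⟩
  have h1 : (S : ℝ) ≤ (colHeight x : ℝ) := by
    exact_mod_cast le_colHeight (Int.natCast_nonneg S) hx
  have h2 : (colHeight x : ℝ) * colHeight x ≤ |(x : ℝ)| := by exact_mod_cast colHeight_sq_le x
  nlinarith

lemma posx_gy_zpow (k : ℤ) : posx (gy ^ k) = 0 := by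
  have h : ∀ n : ℕ, posx (gy ^ n) = 0 := fun n => by
    induction n with
    | zero => rfl
    | succ n ih => rw [pow_succ, posx_mul, ih, posx_gy]; rfl
  rcases Int.eq_nat_or_neg k with ⟨n, rfl | rfl⟩
  · rw [zpow_natCast]; exact h n
  · rw [zpow_neg, zpow_natCast, posx_inv, h n]; rfl

lemma posy_gy_zpow (k : ℤ) : posy (gy ^ k) = k := by
  have h : ∀ n : ℕ, posy (gy ^ n) = n := fun n => by
    induction n with
    | zero => rfl
    | succ n ih => rw [pow_succ, posy_mul, ih, posy_gy]; push_cast; rfl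
  rcases Int.eq_nat_or_neg k with ⟨n, rfl | rfl⟩
  · rw [zpow_natCast]; exact h n
  · rw [zpow_neg, zpow_natCast, posy_inv, h n]

lemma not_lit_gy_zpow (k : ℤ) (x y : ℤ) : ¬ Lit (gy ^ k) x y := by
  have h : ∀ n : ℕ, ∀ x y, ¬ Lit (gy ^ n) x y := fun n => by
    induction n with
    | zero => exact not_lit_one
    | succ n ih =>
      intro x y h
      rw [pow_succ] at h
      exact (lit_mul h).elim (ih _ _) (not_lit_gy _ _)
  rcases Int.eq_nat_or_neg k with ⟨n, rfl | rfl⟩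
  · rw [zpow_natCast]; exact h n x y
  · rw [zpow_neg, zpow_natCast, lit_inv]; exact h n _ _

/-! ### Stability of `⟨q⟩` -/

lemma incl_gy_mem : incl gy ∈ TT := by simp [TT]
lemma tt_mem : tt ∈ TT := by simp [TT]

lemma wordDist_qq_step (k : ℤ) : wordDist TT (qq ^ k) (qq ^ (k + 1)) ≤ 2 := by
  have h1 := wordDist_mul_right_le incl_gy_mem (qq ^ k)
  have h2 := wordDist_mul_right_le tt_mem (qq ^ k * incl gy)
  have h3 := wordDist_triangle TT_closure (qq ^ k) (qq ^ k * incl gy) (qq ^ k * incl gy * tt)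
  have : qq ^ (k + 1) = qq ^ k * incl gy * tt := by rw [zpow_add_one, qq, mul_assoc]
  rw [this]
  omega

lemma wordDist_qq_le_nat (k : ℤ) (n : ℕ) : wordDist TT (qq ^ k) (qq ^ (k + n)) ≤ 2 * n := by
  induction n with
  | zero => simp [wordDist_self]
  | succ n ih =>
    have h1 := wordDist_qq_step (k + n)
    have h2 := wordDist_triangle TT_closure (qq ^ k) (qq ^ (k + n)) (qq ^ (k + n + 1))
    push_cast
    rw [← add_assoc]
    omega

lemma wordDist_qq_le (k l : ℤ) : (wordDist TT (qq ^ k) (qq ^ l) : ℤ) ≤ 2 * |k - l| := by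
  rcases le_total k l with h | h
  · obtain ⟨n, rfl⟩ := Int.le.dest h
    have := wordDist_qq_le_nat k n
    rw [abs_of_nonpos (by omega)]
    omega
  · obtain ⟨n, rfl⟩ := Int.le.dest h
    have := wordDist_qq_le_nat l n
    rw [wordDist_comm TT_closure, abs_of_nonneg (by omega)]
    omega

/-- The exponent sum of `t` changes by at most one along each edge. -/
lemma tExp_le_wordDist (g : GG) : |Multiplicative.toAdd (tExp g)| ≤ wordDist TT 1 g := by
  refine word_induction TT_closure
    (P := fun n g => |Multiplicative.toAdd (tExp g)| ≤ (n : ℤ)) (by simp) ?_ g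
  intro s hs n g ih
  have key : |Multiplicative.toAdd (tExp s)| ≤ 1 := by
    rcases hs with rfl | rfl | rfl | rfl | rfl <;> simp
  simp only [map_mul, map_inv, toAdd_mul, toAdd_inv, abs_le] at *
  push_cast
  omega

lemma le_wordDist_qq (k l : ℤ) : |k - l| ≤ (wordDist TT (qq ^ k) (qq ^ l) : ℤ) := by
  have h := tExp_le_wordDist ((qq ^ k)⁻¹ * qq ^ l)
  rw [← zpow_neg, ← zpow_add, tExp_qq_zpow, ← wordDist_mul_left (qq ^ k), mul_one, ← zpow_add,
    add_neg_cancel_left, show -k + l = -(k - l) by ring, abs_neg] at h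
  exact h

/-- A path from `q ^ k * CC` which ends further along the axis has to pass close to
`q ^ (k + 1) * CC`. This is one crossing of the `k`-th wall separating the axis. -/
lemma exists_next {r : ℕ} {n : ℕ} {σ : ℕ → GG} (hσ : ∀ i < n, wordDist TT (σ i) (σ (i + 1)) ≤ r)
    {N : ℕ} (hn : σ n = qq ^ N) {k : ℕ} (hk : k < N) {i : ℕ} (hi : i ≤ n) {b : BB}
    (hd : wordDist TT (σ i) (qq ^ k * incl b) ≤ r) :
    ∃ i' b', i ≤ i' ∧ i' ≤ n ∧ b' ∈ CC ∧ wordDist TT (σ i') (qq ^ (k + 1) * incl b') ≤ r := by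
  classical
  let I : GG → ℤ := fun x => if ∃ b ∈ CC, x = qq ^ k * incl gy * incl b then 1 else 0
  have hI : ∀ b ∈ CC, ∀ x, I (x * incl b) = I x := by
    intro b hb x
    have : (∃ b' ∈ CC, x * incl b = qq ^ k * incl gy * incl b') ↔
        ∃ b' ∈ CC, x = qq ^ k * incl gy * incl b' := by
      constructor
      · rintro ⟨b', hb', h⟩
        exact ⟨b' * b⁻¹, mul_mem hb' (inv_mem hb), by
          rw [map_mul, map_inv, ← mul_assoc, ← h, mul_inv_cancel_right]⟩
      · rintro ⟨b', hb', h⟩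
        exact ⟨b' * b, mul_mem hb' hb, by rw [map_mul, ← mul_assoc, ← h]⟩
    simp only [I, this]
  obtain ⟨u, -, hub, hut, huc⟩ := exists_cocycle I (fun _ => 0) hI
  have hu : ∀ s ∈ TT, s ≠ tt → ∀ x, u (x * s) = u x := by
    rintro s (rfl | rfl | rfl | rfl | rfl) hs x
    · exact hub x _
    · exact hub x _
    · exact hub x _
    · exact absurd rfl hs
    · rw [huc, add_zero]
  have hstep : ∀ j : ℕ, u (qq ^ (j + 1)) = u (qq ^ j) + if j = k then 1 else 0 := by
    intro j
    have e : qq ^ (j + 1) = qq ^ j * incl gy * tt := by rw [pow_succ, qq, mul_assoc]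
    rw [e, hut, hub]
    congr 1
    simp only [I]
    congr 1
    rw [eq_iff_iff]
    constructor
    · rintro ⟨b, hb, h⟩
      have := congrArg (fun g => Multiplicative.toAdd (tExp g)) h
      simpa [qq] using this
    · rintro rfl
      exact ⟨1, one_mem _, by simp⟩
  have hfar : ∀ j : ℕ, u (qq ^ (k + 1 + j)) = u (qq ^ k) + 1 := by
    intro j
    induction j with
    | zero => rw [add_zero, hstep, if_pos rfl]
    | succ j ih => rw [← add_assoc, hstep, ih, if_neg (by omega), add_zero]
  have hne : u (σ n) ≠ u (qq ^ k * incl b) := by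
    obtain ⟨j, rfl⟩ : ∃ j, N = k + 1 + j := ⟨N - (k + 1), by omega⟩
    rw [hn, hfar, hub]
    omega
  -- crossing the wall between two points at distance at most `r`
  have hcross : ∀ x y, u x ≠ u y → wordDist TT x y ≤ r →
      ∃ b' ∈ CC, wordDist TT y (qq ^ (k + 1) * incl b') ≤ r := by
    intro x y hxy hd
    obtain ⟨z, hz, -, -, hzy⟩ := exists_crossing TT_closure hu hut tt_mem hxy
    have : ∃ b ∈ CC, z = qq ^ k * incl gy * incl b := by
      by_contra hcon
      exact hz (if_neg hcon)
    obtain ⟨b', hb', rfl⟩ := this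
    refine ⟨b', hb', ?_⟩
    rw [wordDist_comm TT_closure]
    have e : qq ^ (k + 1) * incl b' = qq ^ k * incl gy * incl b' * tt := by
      rw [pow_succ, qq, mul_assoc _ (incl b'), ← tt_comm hb']
      simp only [mul_assoc]
    rw [e]
    exact hzy.trans hd
  by_cases h0 : u (σ i) = u (qq ^ k * incl b)
  · have : ∃ i', i ≤ i' ∧ i' < n ∧ u (σ i') ≠ u (σ (i' + 1)) := by
      by_contra! hcon
      have : ∀ m, i + m ≤ n → u (σ (i + m)) = u (σ i) := by
        intro m
        induction m with
        | zero => simp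
        | succ m ih =>
          intro hm
          rw [← add_assoc, ← hcon (i + m) (by omega) (by omega), ih (by omega)]
      have h2 := this (n - i) (by omega)
      rw [show i + (n - i) = n by omega, h0] at h2
      exact hne h2
    obtain ⟨i', h1, h2, h3⟩ := this
    obtain ⟨b', hb', h⟩ := hcross _ _ h3 (hσ i' h2)
    exact ⟨i' + 1, b', by omega, h2, hb', h⟩
  · obtain ⟨b', hb', h⟩ := hcross _ _ (Ne.symm h0) (by rwa [wordDist_comm TT_closure])
    exact ⟨i, b', le_rfl, hi, hb', h⟩

/-- A path along the axis visits the cosets `q ^ k * CC` in order. -/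
lemma exists_track {r : ℕ} {n : ℕ} {σ : ℕ → GG} (hσ : ∀ i < n, wordDist TT (σ i) (σ (i + 1)) ≤ r)
    {N : ℕ} (h0 : σ 0 = 1) (hn : σ n = qq ^ N) (hN : 0 < N) :
    ∃ (τ : ℕ → ℕ) (b : ℕ → BB), τ 0 = 0 ∧ b 0 = 1 ∧ τ N = n ∧ b N = 1 ∧
      (∀ k ≤ N, τ k ≤ n ∧ b k ∈ CC ∧ wordDist TT (σ (τ k)) (qq ^ k * incl (b k)) ≤ r) ∧
      ∀ k < N, τ k ≤ τ (k + 1) := by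
  classical
  let P : ℕ → ℕ × BB → Prop := fun k p =>
    p.1 ≤ n ∧ p.2 ∈ CC ∧ wordDist TT (σ p.1) (qq ^ k * incl p.2) ≤ r
  have hstep : ∀ k p, ∃ p' : ℕ × BB, k < N → P k p → p.1 ≤ p'.1 ∧ P (k + 1) p' := by
    intro k p
    by_cases h : k < N ∧ P k p
    · obtain ⟨hk, hp1, hp2, hp3⟩ := h
      obtain ⟨i', b', h1, h2, h3, h4⟩ := exists_next hσ hn hk hp1 hp3
      exact ⟨(i', b'), fun _ _ => ⟨h1, h2, h3, h4⟩⟩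
    · exact ⟨p, fun h1 h2 => absurd ⟨h1, h2⟩ h⟩
  choose F hF using hstep
  let f : ℕ → ℕ × BB := fun k => Nat.rec (0, 1) F k
  have hf0 : f 0 = (0, 1) := rfl
  have hfs : ∀ k, f (k + 1) = F k (f k) := fun k => rfl
  have hP : ∀ k ≤ N, P k (f k) := by
    intro k
    induction k with
    | zero => intro _; exact ⟨Nat.zero_le _, one_mem _, by simp [hf0, h0, wordDist_self]⟩
    | succ k ih => intro hk; rw [hfs]; exact (hF k _ (by omega) (ih (by omega))).2
  refine ⟨fun k => if k < N then (f k).1 else n, fun k => if k < N then (f k).2 else 1,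
    by simp [hN, hf0], by simp [hN, hf0], by simp, by simp, fun k hk => ?_, fun k hk => ?_⟩
  · by_cases h : k < N
    · simp only [h, if_true]
      exact hP k hk
    · obtain rfl : k = N := by omega
      simp [hn, wordDist_self, one_mem]
  · simp only [hk, if_true]
    split_ifs with h
    · rw [hfs]
      exact (hF k _ hk (hP k hk.le)).1
    · exact (hP k hk.le).1

/-- A lamp in column `x` which is lit at `q ^ i * b` is no longer lit at `q ^ j * b'` if `b'` has no
lit lamps in the column, or if one has moved up by the height of the column. To switch it off, one
has to walk to column `x`. -/
lemma abs_le_wordDist_track {b b' : BB} (hb : b ∈ CC) (hb' : b' ∈ CC) {x y : ℤ} (hl : Lit b x y)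
    {i j : ℕ} (h : colHeight x ≤ (j : ℤ) - i ∨ ∀ y, ¬ Lit b' x y) :
    |x| ≤ wordDist TT (qq ^ i * incl b) (qq ^ j * incl b') := by
  have e : qq ^ i * incl b * (incl b⁻¹ * qq ^ ((j : ℤ) - i) * incl b') = qq ^ j * incl b' := by
    rw [map_inv, zpow_sub, zpow_natCast, zpow_natCast]
    have : Commute (qq ^ j) (qq ^ i)⁻¹ := ((Commute.refl qq).pow_pow j i).inv_right
    rw [this.eq]
    group
  rw [← e]
  nth_rewrite 1 [← mul_one (qq ^ i * incl b)]
  rw [wordDist_mul_left]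
  obtain ⟨h1, h2, h3⟩ := mem_CC.1 hb
  obtain ⟨k1, k2, k3⟩ := mem_CC.1 hb'
  apply lit_le_wordDist (y := y)
  rw [map_mul, map_mul, rho_incl, rho_incl, rho_qq_zpow, mul_assoc]
  apply lit_mul_of_left
  · rwa [lit_inv, h1, h2, add_zero, add_zero]
  · rw [posx_inv, posy_inv, h1, h2, neg_zero, sub_zero, sub_zero]
    intro hlit
    rcases lit_mul hlit with hlit | hlit
    · exact not_lit_gy_zpow _ _ _ hlit
    · rw [posx_gy_zpow, posy_gy_zpow, sub_zero] at hlit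
      rcases h with h | h
      · have := k3 _ _ hlit
        have := h3 _ _ hl
        omega
      · exact h _ hlit

/-- The configurations in `CC` without lit lamps in the columns `|x| ≥ x₀`. -/
def Good (x₀ : ℤ) (b : BB) : Prop := ∀ x y, Lit b x y → |x| < x₀

lemma good_bounded (x₀ : ℤ) :
    ∃ ρ : ℕ, ∀ b ∈ CC, Good x₀ b → wordDist TT 1 (incl b) ≤ ρ := by
  have hfin : {b : BB | b ∈ CC ∧ Good x₀ b}.Finite := by
    refine (finite_box x₀).subset ?_
    rintro b ⟨hb, hg⟩
    obtain ⟨h1, h2, h3⟩ := mem_CC.1 hb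
    refine ⟨h1, h2, fun x y h => ?_⟩
    have e1 := hg x y h
    have e2 := h3 x y h
    have e3 := colHeight_le_abs x
    rw [abs_of_nonneg e2.1]
    omega
  obtain ⟨ρ, hρ⟩ := (hfin.image (fun b => wordDist TT 1 (incl b))).bddAbove
  exact ⟨ρ, fun b hb hg => hρ ⟨b, ⟨hb, hg⟩, rfl⟩⟩

/-- Between two consecutive visits `i₀ < j` to good configurations, a quasi-geodesic has to make
long detours, one for every stretch spent carrying a far away lamp. Hence `j - i₀` is bounded, and
so is the time spent in between. -/
lemma track_gap (lam C : ℝ) (hlam : 1 ≤ lam) (hC : 0 ≤ C) (r : ℕ) :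
    ∃ (x₀ : ℤ) (ρ J : ℕ) (H : ℝ), 0 < x₀ ∧ (∀ b ∈ CC, Good x₀ b → wordDist TT 1 (incl b) ≤ ρ) ∧
    ∀ (σ : ℕ → GG) (n N : ℕ) (τ : ℕ → ℕ) (b : ℕ → BB),
      (∀ s t, s ≤ t → t ≤ n → (t : ℝ) - s ≤ lam * (wordDist TT (σ s) (σ t) + C) ∧
        (wordDist TT (σ s) (σ t) : ℝ) ≤ lam * ((t : ℝ) - s) + C) →
      (∀ k ≤ N, τ k ≤ n ∧ b k ∈ CC ∧ wordDist TT (σ (τ k)) (qq ^ k * incl (b k)) ≤ r) →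
      (∀ k < N, τ k ≤ τ (k + 1)) →
      ∀ i₀ j, i₀ < j → j ≤ N → Good x₀ (b i₀) → Good x₀ (b j) →
        (∀ m, i₀ < m → m < j → ¬ Good x₀ (b m)) → j ≤ i₀ + J ∧ (τ j : ℝ) - τ i₀ ≤ H := by
  obtain ⟨x₀, hx0, hx⟩ := colHeight_sublinear (lam * (2 * lam + 1)) (2 * r + C)
    (by nlinarith) (by positivity)
  obtain ⟨ρ, hρ⟩ := good_bounded x₀
  let E : ℝ := lam * (2 * r + 2 * ρ + C)
  obtain ⟨J, hJ⟩ := exists_nat_ge (E + 2 * lam + 1)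
  refine ⟨x₀, ρ, J, E + 2 * lam * J, hx0, hρ, ?_⟩
  intro σ n N τ b hσ hτ hmono i₀ j hij hjN hgi hgj hbad
  have hτmono : ∀ k m, k + m ≤ N → τ k ≤ τ (k + m) := by
    intro k m
    induction m with
    | zero => simp
    | succ m ih => intro h; exact (ih (by omega)).trans (hmono (k + m) (by omega))
  have hτmono' : ∀ k l, k ≤ l → l ≤ N → τ k ≤ τ l := by
    intro k l h1 h2
    obtain ⟨m, rfl⟩ := Nat.exists_eq_add_of_le h1
    exact hτmono k m h2
  -- distance between track points versus time
  have htri : ∀ k l, k ≤ l → l ≤ N →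
      (wordDist TT (qq ^ k * incl (b k)) (qq ^ l * incl (b l)) : ℝ) ≤
        2 * r + lam * ((τ l : ℝ) - τ k) + C := by
    intro k l h1 h2
    have e1 := (hτ k (h1.trans h2)).2.2
    have e2 := (hτ l h2).2.2
    have e3 := (hσ (τ k) (τ l) (hτmono' k l h1 h2) (hτ l h2).1).2
    have e4 := wordDist_triangle TT_closure (qq ^ k * incl (b k)) (σ (τ k)) (qq ^ l * incl (b l))
    have e5 := wordDist_triangle TT_closure (σ (τ k)) (σ (τ l)) (qq ^ l * incl (b l))
    rw [wordDist_comm TT_closure] at e1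
    have e6 : (wordDist TT (qq ^ k * incl (b k)) (qq ^ l * incl (b l)) : ℝ) ≤
      2 * r + wordDist TT (σ (τ k)) (σ (τ l)) := by
      exact_mod_cast (by omega : wordDist TT (qq ^ k * incl (b k)) (qq ^ l * incl (b l)) ≤
        2 * r + wordDist TT (σ (τ k)) (σ (τ l)))
    linarith
  -- progress away from a bad configuration is slow
  have hbadstep : ∀ k, i₀ < k → k < j → ∃ l, k < l ∧ l ≤ j ∧
      (2 * lam + 1) * ((l : ℝ) - k) ≤ (τ l : ℝ) - τ k := by
    intro k h1 h2
    have hk := hbad k h1 h2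
    simp only [Good, not_forall, not_lt] at hk
    obtain ⟨x, y, hl, hxx⟩ := hk
    have hbk := (hτ k (by omega)).2.1
    have hy := (mem_CC.1 hbk).2.2 x y hl
    obtain ⟨s, hs⟩ : ∃ s : ℕ, colHeight x = s := ⟨_, rfl⟩
    have hxs := hx x hxx
    have hl1 : k < min (k + s) j := by omega
    refine ⟨min (k + s) j, hl1, min_le_right _ _, ?_⟩
    set l := min (k + s) j with hldef
    have hlN : l ≤ N := by omega
    have hfar : |x| ≤ wordDist TT (qq ^ k * incl (b k)) (qq ^ l * incl (b l)) := by
      refine abs_le_wordDist_track hbk (hτ l hlN).2.1 hl ?_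
      by_cases hc : k + s ≤ j
      · left; omega
      · right
        have : l = j := by omega
        rw [this]
        intro y' hy'
        have := hgj x y' hy'
        omega
    have hfar' : |(x : ℝ)| ≤ wordDist TT (qq ^ k * incl (b k)) (qq ^ l * incl (b l)) := by
      exact_mod_cast hfar
    have h3 := htri k l hl1.le hlN
    have h4 : (l : ℝ) - k ≤ colHeight x := by
      rw [hs, sub_le_iff_le_add']
      exact_mod_cast min_le_left (k + s) j
    have h5 : lam * ((2 * lam + 1) * ((l : ℝ) - k)) ≤ lam * ((τ l : ℝ) - τ k) := by
      have : lam * (2 * lam + 1) * ((l : ℝ) - k) ≤ lam * (2 * lam + 1) * colHeight x :=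
        mul_le_mul_of_nonneg_left h4 (by nlinarith)
      nlinarith
    exact le_of_mul_le_mul_left h5 (by linarith)
  have hslow : ∀ m k, j - k = m → i₀ < k → k ≤ j →
      (2 * lam + 1) * ((j : ℝ) - k) ≤ (τ j : ℝ) - τ k := by
    intro m
    induction m using Nat.strong_induction_on with
    | _ m ih =>
      intro k hm h1 h2
      rcases h2.eq_or_lt with rfl | h2
      · simp
      · obtain ⟨l, h3, h4, h5⟩ := hbadstep k h1 h2
        have := ih (j - l) (by omega) l rfl (by omega) h4
        linarith
  have h1 := hslow _ (i₀ + 1) rfl (by omega) hij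
  have h2 : (τ i₀ : ℝ) ≤ τ (i₀ + 1) := by exact_mod_cast hmono i₀ (by omega)
  have h3 := (hσ (τ i₀) (τ j) (hτmono' _ _ hij.le hjN) (hτ j hjN).1).1
  have h4 : wordDist TT (σ (τ i₀)) (σ (τ j)) ≤ 2 * r + 2 * ρ + 2 * (j - i₀) := by
    have e1 := (hτ i₀ (by omega)).2.2
    have e2 := (hτ j hjN).2.2
    have e3 := hρ _ (hτ i₀ (by omega)).2.1 hgi
    have e4 := hρ _ (hτ j hjN).2.1 hgj
    rw [← wordDist_mul_left (qq ^ i₀), mul_one, wordDist_comm TT_closure] at e3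
    rw [← wordDist_mul_left (qq ^ j), mul_one] at e4
    rw [wordDist_comm TT_closure] at e2
    have e5 := wordDist_qq_le_nat i₀ (j - i₀)
    rw [show (i₀ : ℤ) + ((j - i₀ : ℕ) : ℤ) = (j : ℤ) by omega, zpow_natCast, zpow_natCast] at e5
    have t1 := wordDist_triangle TT_closure (σ (τ i₀)) (qq ^ i₀ * incl (b i₀)) (σ (τ j))
    have t2 := wordDist_triangle TT_closure (qq ^ i₀ * incl (b i₀)) (qq ^ i₀) (σ (τ j))
    have t3 := wordDist_triangle TT_closure (qq ^ i₀) (qq ^ j) (σ (τ j))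
    have t4 := wordDist_triangle TT_closure (qq ^ j) (qq ^ j * incl (b j)) (σ (τ j))
    omega
  have h5 : (wordDist TT (σ (τ i₀)) (σ (τ j)) : ℝ) ≤ 2 * r + 2 * ρ + 2 * ((j : ℝ) - i₀) := by
    have : ((j - i₀ : ℕ) : ℝ) = (j : ℝ) - i₀ := Nat.cast_sub hij.le
    rw [← this]
    exact_mod_cast h4
  have h6 : (τ j : ℝ) - τ i₀ ≤ E + 2 * lam * ((j : ℝ) - i₀) := by
    have : lam * (wordDist TT (σ (τ i₀)) (σ (τ j)) + C) ≤
        lam * (2 * r + 2 * ρ + 2 * ((j : ℝ) - i₀) + C) :=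
      mul_le_mul_of_nonneg_left (by linarith) (by linarith)
    simp only [E]
    linarith
  push_cast at h1
  have h7 : (j : ℝ) - i₀ ≤ J := by nlinarith
  constructor
  · have : (j : ℝ) ≤ ((i₀ + J : ℕ) : ℝ) := by push_cast; linarith
    exact_mod_cast this
  · have : lam * ((j : ℝ) - i₀) ≤ lam * J := mul_le_mul_of_nonneg_left h7 (by linarith)
    linarith

lemma exists_greatest {P : ℕ → Prop} {k : ℕ} (h0 : P 0) :
    ∃ i ≤ k, P i ∧ ∀ m, i < m → m ≤ k → ¬ P m := by
  classical
  exact ⟨Nat.findGreatest P k, Nat.findGreatest_le k, Nat.findGreatest_spec (Nat.zero_le k) h0,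
    fun m h1 h2 => Nat.findGreatest_is_greatest h1 h2⟩

/-- Consecutive times around `k` at which a property holds. -/
lemma exists_consecutive {P : ℕ → Prop} {k N : ℕ} (h0 : P 0) (hN : P N) (hk : k < N) :
    ∃ i j, i ≤ k ∧ k < j ∧ j ≤ N ∧ P i ∧ P j ∧ ∀ m, i < m → m < j → ¬ P m := by
  classical
  obtain ⟨i, hi, hPi, hmax⟩ := exists_greatest (k := k) h0
  have hex : ∃ j, k < j ∧ P j := ⟨N, hk, hN⟩
  refine ⟨i, Nat.find hex, hi, (Nat.find_spec hex).1, Nat.find_min' hex ⟨hk, hN⟩, hPi,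
    (Nat.find_spec hex).2, fun m h1 h2 hm => ?_⟩
  by_cases hmk : m ≤ k
  · exact hmax m h1 hmk hm
  · exact Nat.find_min hex h2 ⟨by omega, hm⟩

/-- Quasi-geodesics from `1` to `q ^ N` are uniformly close to `{q ^ k | 0 ≤ k ≤ N}`. -/
lemma quasiGeodesic_core (lam C : ℝ) (hlam : 1 ≤ lam) (hC : 0 ≤ C) :
    ∃ M : ℝ, 0 ≤ M ∧ ∀ (σ : ℕ → GG) (n N : ℕ),
      (∀ s t, s ≤ t → t ≤ n → (t : ℝ) - s ≤ lam * (wordDist TT (σ s) (σ t) + C) ∧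
        (wordDist TT (σ s) (σ t) : ℝ) ≤ lam * ((t : ℝ) - s) + C) →
      σ 0 = 1 → σ n = qq ^ N →
      (∀ i ≤ n, ∃ k ≤ N, (wordDist TT (σ i) (qq ^ k) : ℝ) ≤ M) ∧
      ∀ k ≤ N, ∃ i ≤ n, (wordDist TT (qq ^ k) (σ i) : ℝ) ≤ M := by
  obtain ⟨r, hr⟩ := exists_nat_ge (lam + C)
  obtain ⟨x₀, ρ, J, H, hx0, hρ, hgap⟩ := track_gap lam C hlam hC r
  refine ⟨lam * |H| + C + r + ρ + 2 * J + lam * (lam * C) + C, by positivity, ?_⟩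
  set M : ℝ := lam * |H| + C + r + ρ + 2 * J + lam * (lam * C) + C with hM
  have hlH : 0 ≤ lam * |H| := by positivity
  have hlC : 0 ≤ lam * (lam * C) := by positivity
  have hM0 : 0 ≤ M := by positivity
  intro σ n N hσ h0 hn
  rcases Nat.eq_zero_or_pos N with rfl | hN
  · have hn1 : σ n = 1 := by simpa using hn
    have hnC : (n : ℝ) ≤ lam * C := by
      have := (hσ 0 n (Nat.zero_le _) le_rfl).1
      rw [h0, hn1, wordDist_self] at this
      simpa using this
    refine ⟨fun i hi => ⟨0, le_rfl, ?_⟩, fun k hk => ⟨0, Nat.zero_le _, ?_⟩⟩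
    · have h1 := (hσ 0 i (Nat.zero_le _) hi).2
      rw [h0, wordDist_comm TT_closure] at h1
      have hin : (i : ℝ) ≤ n := by exact_mod_cast hi
      have h2 : lam * ((i : ℝ) - (0 : ℕ)) ≤ lam * (lam * C) :=
        mul_le_mul_of_nonneg_left (by push_cast; linarith) (by linarith)
      rw [pow_zero]
      have : (0 : ℝ) ≤ r + ρ + 2 * J := by positivity
      linarith
    · obtain rfl : k = 0 := by omega
      rw [h0, pow_zero, wordDist_self]
      simpa using hM0
  have hstep : ∀ i < n, wordDist TT (σ i) (σ (i + 1)) ≤ r := by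
    intro i hi
    have h1 := (hσ i (i + 1) (by omega) hi).2
    have : (wordDist TT (σ i) (σ (i + 1)) : ℝ) ≤ r := by
      push_cast at h1
      linarith
    exact_mod_cast this
  obtain ⟨τ, b, hτ0, hb0, hτN, hbN, hτ, hmono⟩ := exists_track hstep h0 hn hN
  have hg1 : Good x₀ 1 := fun x y h => absurd h (not_lit_one x y)
  have hτmono : ∀ k m, k + m ≤ N → τ k ≤ τ (k + m) := by
    intro k m
    induction m with
    | zero => simp
    | succ m ih => intro h; exact (ih (by omega)).trans (hmono (k + m) (by omega))
  have hτmono' : ∀ k l, k ≤ l → l ≤ N → τ k ≤ τ l := by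
    intro k l h1 h2
    obtain ⟨m, rfl⟩ := Nat.exists_eq_add_of_le h1
    exact hτmono k m h2
  have hgood : ∀ i ≤ N, Good x₀ (b i) → wordDist TT (qq ^ i) (σ (τ i)) ≤ ρ + r := by
    intro i hi hg
    have e1 := (hτ i hi).2.2
    have e2 := hρ _ (hτ i hi).2.1 hg
    rw [← wordDist_mul_left (qq ^ i), mul_one] at e2
    rw [wordDist_comm TT_closure] at e1
    have := wordDist_triangle TT_closure (qq ^ i) (qq ^ i * incl (b i)) (σ (τ i))
    omega
  have hcons : ∀ k < N, ∃ i j, i ≤ k ∧ k < j ∧ j ≤ N ∧ wordDist TT (qq ^ i) (σ (τ i)) ≤ ρ + r ∧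
      j ≤ i + J ∧ (τ j : ℝ) - τ i ≤ H := by
    intro k hk
    obtain ⟨i, j, h1, h2, h3, h4, h5, h6⟩ := exists_consecutive (P := fun k => Good x₀ (b k))
      (by rw [hb0]; exact hg1) (by rw [hbN]; exact hg1) hk
    obtain ⟨h7, h8⟩ := hgap σ n N τ b hσ hτ hmono i j (by omega) h3 h4 h5 h6
    exact ⟨i, j, h1, h2, h3, hgood i (by omega) h4, h7, h8⟩
  constructor
  · intro i hi
    rcases hi.eq_or_lt with rfl | hi
    · exact ⟨N, le_rfl, by rw [hn, wordDist_self]; simpa using hM0⟩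
    obtain ⟨k, hkN, hk, hkmax⟩ := exists_greatest (P := fun k => τ k ≤ i) (k := N)
      (by rw [hτ0]; exact Nat.zero_le _)
    have hkN' : k < N := by
      rcases hkN.eq_or_lt with rfl | h
      · omega
      · exact h
    obtain ⟨i₀, j, h1, h2, h3, h4, -, h5⟩ := hcons k hkN'
    refine ⟨i₀, by omega, ?_⟩
    have hk1 : i < τ (k + 1) := not_le.1 (hkmax (k + 1) (by omega) hkN')
    have hj : τ (k + 1) ≤ τ j := hτmono' _ _ h2 h3
    have hi0 : τ i₀ ≤ τ k := hτmono' _ _ h1 hkN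
    have e1 := (hσ (τ i₀) i (by omega) hi.le).2
    have e2 : (i : ℝ) ≤ τ j := by exact_mod_cast (by omega : i ≤ τ j)
    have e3 : lam * ((i : ℝ) - τ i₀) ≤ lam * |H| :=
      mul_le_mul_of_nonneg_left (by linarith [le_abs_self H]) (by linarith)
    have e4 := wordDist_triangle TT_closure (qq ^ i₀) (σ (τ i₀)) (σ i)
    have e5 : (wordDist TT (qq ^ i₀) (σ i) : ℝ) ≤ ρ + r + wordDist TT (σ (τ i₀)) (σ i) := by
      exact_mod_cast (by omega : wordDist TT (qq ^ i₀) (σ i) ≤ ρ + r + wordDist TT (σ (τ i₀)) (σ i))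
    rw [wordDist_comm TT_closure]
    have : (0 : ℝ) ≤ 2 * J := by positivity
    linarith
  · intro k hk
    rcases hk.eq_or_lt with rfl | hk
    · exact ⟨n, le_rfl, by rw [hn, wordDist_self]; simpa using hM0⟩
    obtain ⟨i₀, j, h1, h2, h3, h4, h5, -⟩ := hcons k hk
    refine ⟨τ i₀, (hτ i₀ (by omega)).1, ?_⟩
    have e1 := wordDist_qq_le_nat i₀ (k - i₀)
    rw [show (i₀ : ℤ) + ((k - i₀ : ℕ) : ℤ) = (k : ℤ) by omega, zpow_natCast, zpow_natCast,
      wordDist_comm TT_closure] at e1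
    have e2 := wordDist_triangle TT_closure (qq ^ k) (qq ^ i₀) (σ (τ i₀))
    have e3 : (wordDist TT (qq ^ k) (σ (τ i₀)) : ℝ) ≤ 2 * J + ρ + r := by
      exact_mod_cast (by omega : wordDist TT (qq ^ k) (σ (τ i₀)) ≤ 2 * J + ρ + r)
    linarith

/-- Quasi-geodesics with endpoints on `⟨q⟩` are uniformly close to the segment of `⟨q⟩` between
their endpoints. -/
lemma quasiGeodesic_close (lam C : ℝ) (hlam : 1 ≤ lam) (hC : 0 ≤ C) :
    ∃ M : ℝ, 0 ≤ M ∧ ∀ (σ : ℤ → GG) (n : ℤ), 0 ≤ n →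
      IsQuasiGeodesicOn (fun a b : GG => (wordDist TT a b : ℝ)) lam C σ n →
      ∀ α β : ℤ, σ 0 = qq ^ α → σ n = qq ^ β →
      (∀ i, 0 ≤ i → i ≤ n → ∃ k, min α β ≤ k ∧ k ≤ max α β ∧
        (wordDist TT (σ i) (qq ^ k) : ℝ) ≤ M) ∧
      ∀ k, min α β ≤ k → k ≤ max α β → ∃ i, 0 ≤ i ∧ i ≤ n ∧
        (wordDist TT (qq ^ k) (σ i) : ℝ) ≤ M := by
  obtain ⟨M, hM0, hM⟩ := quasiGeodesic_core lam C hlam hC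
  refine ⟨M, hM0, ?_⟩
  have key : ∀ (σ : ℤ → GG) (n : ℤ), 0 ≤ n →
      IsQuasiGeodesicOn (fun a b : GG => (wordDist TT a b : ℝ)) lam C σ n →
      ∀ α β : ℤ, α ≤ β → σ 0 = qq ^ α → σ n = qq ^ β →
      (∀ i, 0 ≤ i → i ≤ n → ∃ k, α ≤ k ∧ k ≤ β ∧
        (wordDist TT (σ i) (qq ^ k) : ℝ) ≤ M) ∧
      ∀ k, α ≤ k → k ≤ β → ∃ i, 0 ≤ i ∧ i ≤ n ∧
        (wordDist TT (qq ^ k) (σ i) : ℝ) ≤ M := by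
    intro σ n hn hσ α β hαβ h0 h1
    lift n to ℕ using hn
    obtain ⟨N, rfl⟩ := Int.le.dest hαβ
    obtain ⟨h2, h3⟩ := hM (fun i => (qq ^ α)⁻¹ * σ i) n N (by
      intro s t hst htn
      have := hσ s t (by omega) (by omega) (by omega) (by omega)
      simp only [wordDist_mul_left]
      have e : |((s : ℤ) : ℝ) - ((t : ℤ) : ℝ)| = (t : ℝ) - s := by
        have : (s : ℝ) ≤ t := by exact_mod_cast hst
        push_cast
        rw [abs_sub_comm, abs_of_nonneg (by linarith)]
      rw [e] at this
      refine ⟨?_, this.2⟩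
      have h3 := this.1
      rw [sub_le_iff_le_add, inv_mul_le_iff₀ (by linarith)] at h3
      exact h3) (by simp [h0]) (by simp [h1, zpow_add])
    have hmul : ∀ g (k : ℕ), wordDist TT ((qq ^ α)⁻¹ * g) (qq ^ k) =
        wordDist TT g (qq ^ (α + k)) := by
      intro g k
      rw [← wordDist_mul_left (qq ^ α), mul_inv_cancel_left, zpow_add, zpow_natCast]
    constructor
    · intro i hi hin
      lift i to ℕ using hi
      obtain ⟨k, hk, h⟩ := h2 i (by omega)
      rw [hmul] at h
      exact ⟨α + k, by omega, by omega, h⟩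
    · intro k hk hkN
      obtain ⟨k, rfl⟩ := Int.le.dest hk
      obtain ⟨i, hi, h⟩ := h3 k (by omega)
      rw [wordDist_comm TT_closure, hmul, wordDist_comm TT_closure] at h
      exact ⟨i, by omega, by omega, h⟩
  intro σ n hn hσ α β h0 h1
  rcases le_total α β with h | h
  · rw [min_eq_left h, max_eq_right h]
    exact key σ n hn hσ α β h h0 h1
  · rw [min_eq_right h, max_eq_left h]
    obtain ⟨k1, k2⟩ := key (fun i => σ (n - i)) n hn (by
      intro s t h1 h2 h3 h4
      have := hσ (n - s) (n - t) (by omega) (by omega) (by omega) (by omega)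
      push_cast at this
      rw [show ((n : ℝ) - s - (n - t)) = -((s : ℝ) - t) by ring, abs_neg] at this
      exact this) β α h (by simpa using h1) (by simpa using h0)
    constructor
    · intro i hi hin
      obtain ⟨k, h1, h2, h3⟩ := k1 (n - i) (by omega) (by omega)
      rw [sub_sub_cancel] at h3
      exact ⟨k, h1, h2, h3⟩
    · intro k h1 h2
      obtain ⟨i, h3, h4, h5⟩ := k2 k h1 h2
      exact ⟨n - i, by omega, by omega, h5⟩

lemma wordDist_zpowers_le (k l : ℤ) :
    (wordDist ({⟨qq, Subgroup.mem_zpowers qq⟩} : Set (Subgroup.zpowers qq))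
      (⟨qq, Subgroup.mem_zpowers qq⟩ ^ k) (⟨qq, Subgroup.mem_zpowers qq⟩ ^ l) : ℤ) ≤ |k - l| := by
  set Q : Subgroup.zpowers qq := ⟨qq, Subgroup.mem_zpowers qq⟩
  have h : ∀ (s : Subgroup.zpowers qq), s ∈ ({Q} : Set _) ∪ ({Q} : Set _)⁻¹ → ∀ (n : ℕ) (x y),
      s ^ n = x⁻¹ * y → wordDist ({Q} : Set _) x y ≤ n := by
    intro s hs n x y hxy
    have := wordDist_le_length (T := ({Q} : Set _)) (List.replicate n s)
      (fun r hr => by rw [List.eq_of_mem_replicate hr]; exact hs) (by simpa using hxy)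
    simpa using this
  rcases le_total k l with hkl | hkl
  · obtain ⟨n, rfl⟩ := Int.le.dest hkl
    have := h Q (by simp) n (Q ^ k) (Q ^ (k + n)) (by simp [zpow_add])
    rw [abs_of_nonpos (by omega)]
    omega
  · obtain ⟨n, rfl⟩ := Int.le.dest hkl
    have := h Q⁻¹ (by simp) n (Q ^ (l + n)) (Q ^ l) (by simp [zpow_add])
    rw [abs_of_nonneg (by omega)]
    omega

lemma le_wordDist_zpowers (k l : ℤ) :
    (wordDist TT (qq ^ k) (qq ^ l) : ℤ) ≤
      2 * wordDist ({⟨qq, Subgroup.mem_zpowers qq⟩} : Set (Subgroup.zpowers qq))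
      (⟨qq, Subgroup.mem_zpowers qq⟩ ^ k) (⟨qq, Subgroup.mem_zpowers qq⟩ ^ l) := by
  set Q : Subgroup.zpowers qq := ⟨qq, Subgroup.mem_zpowers qq⟩
  have hcl : Subgroup.closure ({Q} : Set (Subgroup.zpowers qq)) = ⊤ := by
    rw [eq_top_iff]
    rintro ⟨x, k, rfl⟩ -
    rw [← Subgroup.zpowers_eq_closure]
    exact ⟨k, by ext; simp [Q]⟩
  have h := word_induction hcl (P := fun n g => wordDist TT 1 (g : GG) ≤ 2 * n)
    (by simp [wordDist_self]) (by
      rintro s rfl n g ih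
      have h1 := wordDist_qq_le 0 1
      have h2 := wordDist_qq_le 0 (-1)
      simp at h1 h2
      constructor
      · have := wordDist_triangle TT_closure 1 qq (qq * g)
        have e := wordDist_mul_left (T := TT) qq 1 (g : GG)
        rw [mul_one] at e
        simp only [Subgroup.coe_mul, Q]
        omega
      · have := wordDist_triangle TT_closure 1 qq⁻¹ (qq⁻¹ * g)
        have e := wordDist_mul_left (T := TT) qq⁻¹ 1 (g : GG)
        rw [mul_one] at e
        simp only [Subgroup.coe_mul, Subgroup.coe_inv, Q]
        omega) ((Q ^ k)⁻¹ * Q ^ l)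
  rw [← wordDist_mul_left (Q ^ k), mul_one, mul_inv_cancel_left] at h
  have e : (((Q ^ k)⁻¹ * Q ^ l : Subgroup.zpowers qq) : GG) = (qq ^ k)⁻¹ * qq ^ l := by
    simp [Q]
  rw [e, ← wordDist_mul_left (qq ^ k), mul_one, mul_inv_cancel_left] at h
  exact_mod_cast h

theorem stable_qq :
    Stable TT (Subgroup.zpowers qq) {⟨qq, Subgroup.mem_zpowers qq⟩} := by
  constructor
  · refine ⟨2, 0, one_le_two, le_rfl, ?_⟩
    rintro ⟨x, k, rfl⟩ ⟨y, l, rfl⟩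
    have ek : ∀ k : ℤ, (⟨qq ^ k, ⟨k, rfl⟩⟩ : Subgroup.zpowers qq) =
      ⟨qq, Subgroup.mem_zpowers qq⟩ ^ k := fun k => by ext; simp
    have h1 := wordDist_zpowers_le k l
    have h2 := le_wordDist_zpowers k l
    have h3 := le_wordDist_qq k l
    rw [← ek, ← ek] at h1 h2
    have h4 := h1.trans h3
    have h2' : (wordDist TT (qq ^ k) (qq ^ l) : ℝ) ≤ 2 * wordDist
      ({⟨qq, Subgroup.mem_zpowers qq⟩} : Set (Subgroup.zpowers qq)) ⟨qq ^ k, ⟨k, rfl⟩⟩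
        ⟨qq ^ l, ⟨l, rfl⟩⟩ := by exact_mod_cast h2
    have h4' : (wordDist ({⟨qq, Subgroup.mem_zpowers qq⟩} : Set (Subgroup.zpowers qq))
      ⟨qq ^ k, ⟨k, rfl⟩⟩ ⟨qq ^ l, ⟨l, rfl⟩⟩ : ℝ) ≤ wordDist TT (qq ^ k) (qq ^ l) := by
      exact_mod_cast h4
    refine ⟨?_, by simpa using h2'⟩
    refine le_trans ?_ h4'
    rw [sub_zero]
    have : (0 : ℝ) ≤ wordDist ({⟨qq, Subgroup.mem_zpowers qq⟩} : Set (Subgroup.zpowers qq))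
      ⟨qq ^ k, ⟨k, rfl⟩⟩ ⟨qq ^ l, ⟨l, rfl⟩⟩ := by positivity
    change (2 : ℝ)⁻¹ * (wordDist ({⟨qq, Subgroup.mem_zpowers qq⟩} : Set (Subgroup.zpowers qq))
      ⟨qq ^ k, ⟨k, rfl⟩⟩ ⟨qq ^ l, ⟨l, rfl⟩⟩ : ℝ) ≤ _
    linarith
  · intro lam C hlam hC
    obtain ⟨M, hM0, hM⟩ := quasiGeodesic_close lam C hlam hC
    refine ⟨2 * M, by linarith, ?_⟩
    intro σ τ n m hn hm hσ hτ h0 h1 hK0 hKn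
    obtain ⟨α, hα⟩ := hK0
    obtain ⟨β, hβ⟩ := hKn
    obtain ⟨a1, a2⟩ := hM σ n hn hσ α β hα.symm hβ.symm
    obtain ⟨b1, b2⟩ := hM τ m hm hτ α β (h0 ▸ hα.symm) (h1 ▸ hβ.symm)
    have tri : ∀ x y z : GG, (wordDist TT x y : ℝ) ≤ M → (wordDist TT y z : ℝ) ≤ M →
        (wordDist TT x z : ℝ) ≤ 2 * M := by
      intro x y z hxy hyz
      have : (wordDist TT x z : ℝ) ≤ wordDist TT x y + wordDist TT y z := by
        exact_mod_cast wordDist_triangle TT_closure x y z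
      linarith
    constructor
    · intro i hi hin
      obtain ⟨k, hk1, hk2, hk⟩ := a1 i hi hin
      obtain ⟨j, hj1, hj2, hj⟩ := b2 k hk1 hk2
      exact ⟨j, hj1, hj2, tri _ _ _ hk hj⟩
    · intro i hi hin
      obtain ⟨k, hk1, hk2, hk⟩ := b1 i hi hin
      obtain ⟨j, hj1, hj2, hj⟩ := a2 k hk1 hk2
      exact ⟨j, hj1, hj2, tri _ _ _ hk hj⟩

/-! ### `⟨q⟩` is not recognized by acylindrical actions -/

/-- The configuration whose only lit lamp is at `(x, y)`, with the lamplighter at the origin. -/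
def lampAt (x y : ℤ) : BB := gy ^ y * (gx ^ x * ga * (gx ^ x)⁻¹) * (gy ^ y)⁻¹

lemma gx_zpow (k : ℤ) : posx (gx ^ k) = k ∧ posy (gx ^ k) = 0 ∧ ∀ x y, ¬ Lit (gx ^ k) x y := by
  have h : ∀ n : ℕ, posx (gx ^ n) = n ∧ posy (gx ^ n) = 0 ∧ ∀ x y, ¬ Lit (gx ^ n) x y := fun n => by
    induction n with
    | zero => exact ⟨rfl, rfl, not_lit_one⟩
    | succ n ih =>
      obtain ⟨h1, h2, h3⟩ := ih
      refine ⟨by rw [pow_succ, posx_mul, h1, posx_gx]; push_cast; rfl,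
        by rw [pow_succ, posy_mul, h2, posy_gx]; rfl, fun x y h => ?_⟩
      rw [pow_succ] at h
      exact (lit_mul h).elim (h3 _ _) (not_lit_gx _ _)
  rcases Int.eq_nat_or_neg k with ⟨n, rfl | rfl⟩
  · rw [zpow_natCast]; exact h n
  · obtain ⟨h1, h2, h3⟩ := h n
    refine ⟨by rw [zpow_neg, zpow_natCast, posx_inv, h1],
      by rw [zpow_neg, zpow_natCast, posy_inv, h2]; rfl, fun x y => ?_⟩
    rw [zpow_neg, zpow_natCast, lit_inv]
    exact h3 _ _

/-- Conjugating a configuration by a translation translates the configuration. -/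
lemma lit_conj {s b : BB} (hs : ∀ x y, ¬ Lit s x y) {x y : ℤ} :
    Lit (s * b * s⁻¹) x y ↔ Lit b (x - posx s) (y - posy s) := by
  have hs' : ∀ x y, ¬ Lit s⁻¹ x y := fun x y => by rw [lit_inv]; exact hs _ _
  constructor
  · intro h
    rcases lit_mul h with h | h
    · exact (lit_mul h).resolve_left (hs _ _)
    · exact absurd h (hs' _ _)
  · intro h
    exact lit_mul_of_left (lit_mul_of_right (hs _ _) h) (hs' _ _)

lemma posx_lampAt (x y : ℤ) : posx (lampAt x y) = 0 := by
  simp only [lampAt, posx_mul, posx_inv, posx_ga]; ring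

lemma posy_lampAt (x y : ℤ) : posy (lampAt x y) = 0 := by
  simp only [lampAt, posy_mul, posy_inv, posy_ga]; ring

lemma lit_lampAt {x y x' y' : ℤ} : Lit (lampAt x y) x' y' ↔ x' = x ∧ y' = y := by
  rw [lampAt, lit_conj (not_lit_gy_zpow y), lit_conj (gx_zpow x).2.2, lit_ga,
    posx_gy_zpow, posy_gy_zpow, (gx_zpow x).1, (gx_zpow x).2.1]
  omega

lemma lampAt_mem_CC {x y : ℤ} (h0 : 0 ≤ y) (h1 : y < colHeight x) : lampAt x y ∈ CC := by
  refine mem_CC.2 ⟨posx_lampAt x y, posy_lampAt x y, fun x' y' h => ?_⟩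
  obtain ⟨rfl, rfl⟩ := lit_lampAt.1 h
  exact ⟨h0, h1⟩

/-- Inside the region, conjugation by `q` moves lamps up by one. -/
lemma qq_conj_lampAt {x y : ℤ} (h0 : 0 ≤ y) (j : ℕ) (h1 : y + j ≤ colHeight x) :
    qq ^ j * incl (lampAt x y) * (qq ^ j)⁻¹ = incl (lampAt x (y + j)) := by
  induction j with
  | zero => simp
  | succ j ih =>
    push_cast at h1
    have h := tt_comm (lampAt_mem_CC (x := x) (y := y + j) (by omega) (by omega))
    have e : gy * lampAt x (y + j) * gy⁻¹ = lampAt x (y + (j + 1)) := by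
      simp only [lampAt, ← add_assoc, zpow_add_one, (Commute.zpow_self gy (y + j)).eq]
      group
    calc qq ^ (j + 1) * incl (lampAt x y) * (qq ^ (j + 1))⁻¹
        = qq * (qq ^ j * incl (lampAt x y) * (qq ^ j)⁻¹) * qq⁻¹ := by rw [pow_succ']; group
      _ = incl gy * (tt * incl (lampAt x (y + j))) * (tt⁻¹ * (incl gy)⁻¹) := by
          rw [ih (by omega), qq]; group
      _ = incl (gy * lampAt x (y + j) * gy⁻¹) := by
          rw [h, map_mul, map_mul, map_inv]; group
      _ = _ := by rw [e]; push_cast; rfl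

/-- A finite group of isometries of a geodesic hyperbolic space has an almost fixed point, by the
usual quasi-centre argument. -/
lemma exists_quasi_centre {G X : Type*} [Group G] [MetricSpace X] (hX : GeodesicSpace X) {δ : ℝ}
    (hδ : ∀ w x y z : X, dist w x + dist y z ≤
      max (dist w y + dist x z) (dist w z + dist x y) + 2 * δ)
    {φ : G → X → X} (hφ : IsIsometricAction φ) {S : Set G} (hS : S.Finite) (h1 : 1 ∈ S)
    (hmul : ∀ s ∈ S, ∀ s' ∈ S, s⁻¹ * s' ∈ S) (x₀ : X) :
    ∃ z, ∀ s ∈ S, dist z (φ s z) ≤ 4 * δ + 2 := by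
  obtain ⟨φ1, φm, φd⟩ := hφ
  let V : Set ℝ := {ρ | ∃ z, ∀ s ∈ S, dist z (φ s x₀) ≤ ρ}
  have hbdd : BddBelow V := ⟨0, by
    rintro ρ ⟨z, hz⟩
    exact dist_nonneg.trans (hz 1 h1)⟩
  have hne : V.Nonempty := by
    obtain ⟨ρ, hρ⟩ := (hS.image fun s => dist x₀ (φ s x₀)).bddAbove
    exact ⟨ρ, x₀, fun s hs => hρ ⟨s, hs, rfl⟩⟩
  obtain ⟨ρ, ⟨z, hz⟩, hρ⟩ := exists_lt_of_csInf_lt hne (lt_add_one (sInf V))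
  refine ⟨z, fun s hs => ?_⟩
  have hz' : ∀ s' ∈ S, dist (φ s z) (φ s' x₀) ≤ ρ := by
    intro s' hs'
    have := hz _ (hmul s hs s' hs')
    rwa [← φd s, ← φm, mul_inv_cancel_left] at this
  obtain ⟨γ, g0, g1, hγ⟩ := hX z (φ s z)
  set D := dist z (φ s z) with hD
  have hD0 : 0 ≤ D := dist_nonneg
  have m0 : dist (γ (D / 2)) z ≤ D / 2 := by
    rw [← g0, hγ _ _ ⟨by linarith, by linarith⟩ ⟨le_rfl, hD0⟩, sub_zero,
      abs_of_nonneg (by linarith)]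
  have m1 : dist (γ (D / 2)) (φ s z) ≤ D / 2 := by
    rw [← g1, hγ _ _ ⟨by linarith, by linarith⟩ ⟨hD0, le_rfl⟩, abs_of_nonpos (by linarith)]
    linarith
  have hm : ρ - D / 2 + 2 * δ ∈ V := by
    refine ⟨γ (D / 2), fun s' hs' => ?_⟩
    have h := hδ (γ (D / 2)) (φ s' x₀) z (φ s z)
    have e1 := hz' s' hs'
    have e2 := hz s' hs'
    rw [dist_comm] at e1 e2
    have : max (dist (γ (D / 2)) z + dist (φ s' x₀) (φ s z))
        (dist (γ (D / 2)) (φ s z) + dist (φ s' x₀) z) ≤ D / 2 + ρ :=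
      max_le (by linarith) (by linarith)
    linarith
  have := csInf_le hbdd hm
  linarith

/-- If the orbit of `g` is quasi-isometrically embedded, then the translation length of `g ^ j` is
at least `j / lam`. -/
lemma le_dist_of_isQIE {G X : Type*} [Group G] [MetricSpace X] {φ : G → X → X}
    (hφ : IsIsometricAction φ) {g : G} {x : X} {lam C : ℝ}
    (h : ∀ m n : ℤ, lam⁻¹ * |(m : ℝ) - n| - C ≤ dist (φ (g ^ m) x) (φ (g ^ n) x)) (z : X) (j : ℕ) :
    lam⁻¹ * j ≤ dist z (φ (g ^ j) z) := by
  obtain ⟨φ1, φm, φd⟩ := hφ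
  by_contra! hlt
  set D := dist z (φ (g ^ j) z)
  have hpow : ∀ m : ℕ, dist z (φ (g ^ (j * m)) z) ≤ m * D := by
    intro m
    induction m with
    | zero => simp [φ1]
    | succ m ih =>
      have h1 := dist_triangle z (φ (g ^ (j * m)) z) (φ (g ^ (j * (m + 1))) z)
      have h2 : dist (φ (g ^ (j * m)) z) (φ (g ^ (j * (m + 1))) z) = D := by
        rw [mul_add, mul_one, pow_add, φm, φd]
      push_cast
      linarith
  obtain ⟨m, hm⟩ := exists_nat_gt ((2 * dist x z + C) / (lam⁻¹ * j - D))
  rw [div_lt_iff₀ (by linarith)] at hm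
  have h1 := h 0 ((j * m : ℕ) : ℤ)
  rw [zpow_zero, φ1, zpow_natCast, Int.cast_zero, zero_sub, abs_neg, abs_of_nonneg (by positivity)]
    at h1
  push_cast at h1
  have h2 := dist_triangle4 x z (φ (g ^ (j * m)) z) (φ (g ^ (j * m)) x)
  rw [φd, dist_comm z x] at h2
  have h3 := hpow m
  nlinarith

theorem not_recognized (X : Type) [MetricSpace X] (hX : GeodesicSpace X)
    (hδ : GromovHyperbolicD (fun a b : X => dist a b)) (φ : GG → X → X) (hφ : IsIsometricAction φ)
    (hacyl : AcylindricalAction φ) (x : X) :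
    ¬ IsQIE (fun m n : ℤ => |(m : ℝ) - (n : ℝ)|) (fun a b : X => dist a b)
      (fun n : ℤ => φ (qq ^ n) x) := by
  rintro ⟨lam, C, hlam, -, hqi⟩
  obtain ⟨δ, hδ0, hδ⟩ := hδ
  obtain ⟨N, L, hN, hL, hacyl⟩ := hacyl (4 * δ + 2) (by linarith)
  obtain ⟨j, hj⟩ := exists_nat_ge (lam * L)
  set s : ℤ := j + N + 1 with hs
  set x₀ : ℤ := s * s with hx₀
  have hcol : s ≤ colHeight x₀ := le_colHeight (by omega) (le_abs_self _)
  -- the finite group of configurations supported in the column over `x₀`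
  let S : Set BB := {b | posx b = 0 ∧ posy b = 0 ∧
    ∀ x y, Lit b x y → x = x₀ ∧ 0 ≤ y ∧ y ≤ colHeight x₀}
  have hSfin : S.Finite := by
    refine (finite_box |x₀|).subset ?_
    rintro b ⟨h1, h2, h3⟩
    refine ⟨h1, h2, fun x y h => ?_⟩
    obtain ⟨h6, h4, h5⟩ := h3 x y h
    have := colHeight_le_abs x₀
    rw [abs_of_nonneg h4, h6]
    exact ⟨le_rfl, by omega⟩
  have hSmul : ∀ b ∈ S, ∀ b' ∈ S, b⁻¹ * b' ∈ S := by
    rintro b ⟨h1, h2, h3⟩ b' ⟨k1, k2, k3⟩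
    refine ⟨by rw [posx_mul, posx_inv]; omega, by rw [posy_mul, posy_inv]; omega, fun x y h => ?_⟩
    rcases lit_mul h with h | h
    · rw [lit_inv, h1, h2, add_zero, add_zero] at h
      exact h3 x y h
    · rw [posx_inv, posy_inv, h1, h2, neg_zero, sub_zero, sub_zero] at h
      exact k3 x y h
  obtain ⟨z, hz⟩ := exists_quasi_centre hX hδ hφ (hSfin.image incl)
    ⟨1, ⟨rfl, rfl, fun x y h => absurd h (not_lit_one x y)⟩, map_one _⟩
    (by
      rintro _ ⟨b, hb, rfl⟩ _ ⟨b', hb', rfl⟩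
      exact ⟨b⁻¹ * b', hSmul b hb b' hb', by rw [map_mul, map_inv]⟩) x
  have hlampS : ∀ y : ℤ, 0 ≤ y → y ≤ s → incl (lampAt x₀ y) ∈ incl '' S := by
    intro y h0 h1
    refine ⟨_, ⟨posx_lampAt _ _, posy_lampAt _ _, fun x' y' h => ?_⟩, rfl⟩
    obtain ⟨rfl, rfl⟩ := lit_lampAt.1 h
    exact ⟨rfl, h0, by omega⟩
  obtain ⟨φ1, φm, φd⟩ := hφ
  have hfar : L ≤ dist z (φ (qq ^ j)⁻¹ z) := by
    have h1 := le_dist_of_isQIE ⟨φ1, φm, φd⟩ (fun m n => (hqi m n).1) z j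
    have h2 : dist z (φ (qq ^ j)⁻¹ z) = dist z (φ (qq ^ j) z) := by
      rw [← φd (qq ^ j), ← φm, mul_inv_cancel, φ1, dist_comm]
    rw [h2]
    refine le_trans ?_ h1
    rw [le_inv_mul_iff₀ (by linarith)]
    exact hj
  obtain ⟨hfin, hcard⟩ := hacyl _ _ hfar
  let e : ℕ → GG := fun y => incl (lampAt x₀ y)
  have he : Function.Injective e := by
    intro y y' h
    have h1 := incl_injective h
    have h2 : Lit (lampAt x₀ y') x₀ y := h1 ▸ lit_lampAt.2 ⟨rfl, rfl⟩
    have := (lit_lampAt.1 h2).2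
    exact_mod_cast this
  have hsub : e '' (Finset.range (N + 1) : Set ℕ) ⊆ {g : GG | dist z (φ g z) ≤ 4 * δ + 2 ∧
      dist (φ (qq ^ j)⁻¹ z) (φ g (φ (qq ^ j)⁻¹ z)) ≤ 4 * δ + 2} := by
    rintro _ ⟨y, hy, rfl⟩
    have hy : y < N + 1 := by simpa using hy
    refine ⟨hz _ (hlampS y (by omega) (by omega)), ?_⟩
    rw [← φd (qq ^ j), ← φm, ← φm, ← φm, mul_inv_cancel, φ1,
      qq_conj_lampAt (by omega) j (by omega)]
    exact hz _ (hlampS _ (by omega) (by omega))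
  have := Set.ncard_le_ncard hsub hfin
  rw [Set.ncard_image_of_injective _ he, Set.ncard_coe_finset, Finset.card_range] at this
  omega

/-! ### The tree metric on `GG` -/

open Classical in
lemma exists_vv : ∃ u : GG → ℤ, u 1 = 0 ∧ (∀ x b, u (x * incl b) = u x) ∧
    (∀ x, u (x * tt) = u x) ∧ ∀ x, u (x * cc) = u x + if x = 1 then 1 else 0 := by
  obtain ⟨u, h1, h2, h3, h4⟩ := exists_cocycle (fun _ => 0) (fun x => if x = 1 then 1 else 0)
    (fun _ _ _ => rfl)
  exact ⟨u, h1, h2, fun x => by rw [h3, add_zero], h4⟩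

/-- The indicator function of one side of the wall dual to the `c`-edge from `1` to `cc`. -/
noncomputable def vv : GG → ℤ := exists_vv.choose

/-- The indicator function of one side of the wall dual to the `c`-edge from `f` to `f * cc`. -/
noncomputable def wall (f x : GG) : ℤ := vv (f⁻¹ * x)

lemma vv_one : vv 1 = 0 := exists_vv.choose_spec.1

lemma vv_mul_of_ne {s : GG} (hs : s ∈ TT) (hc : s ≠ cc) (x : GG) : vv (x * s) = vv x := by
  rcases hs with rfl | rfl | rfl | rfl | rfl
  · exact exists_vv.choose_spec.2.1 _ _
  · exact exists_vv.choose_spec.2.1 _ _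
  · exact exists_vv.choose_spec.2.1 _ _
  · exact exists_vv.choose_spec.2.2.1 _
  · exact absurd rfl hc

lemma vv_mul_cc_of_ne {x : GG} (hx : x ≠ 1) : vv (x * cc) = vv x := by
  have := exists_vv.choose_spec.2.2.2 x
  rwa [if_neg hx, add_zero] at this

lemma vv_cc : vv cc = 1 := by
  have := exists_vv.choose_spec.2.2.2 1
  rw [if_pos rfl, one_mul] at this
  rw [vv, this]
  have h := vv_one
  rw [vv] at h
  rw [h, zero_add]

lemma cc_mem : cc ∈ TT := by simp [TT]

/-- Induction along words, from the left to the right. -/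
lemma TT_induction_right {P : GG → Prop} (h1 : P 1) (hmul : ∀ x, ∀ s ∈ TT, P x → P (x * s))
    (hinv : ∀ x, ∀ s ∈ TT, P x → P (x * s⁻¹)) (x : GG) : P x :=
  Subgroup.closure_induction_right (p := fun x _ => P x) h1 (fun x _ s hs => hmul x s hs)
    (fun x _ s hs => hinv x s hs) (TT_closure ▸ Subgroup.mem_top x)

/-- Each wall has exactly two sides, and of two distinct walls each is contained in one side of
the other. Both facts are checked along a word from `1` to `x`. -/
lemma vv_nested (x : GG) : (vv x = 0 ∨ vv x = 1) ∧ ∀ g ≠ 1,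
    (vv g = 1 → vv x = 0 → vv (g⁻¹ * x) = vv g⁻¹) ∧
    (vv g = 0 → vv x = 1 → vv (g⁻¹ * x) = vv (g⁻¹ * cc)) := by
  refine TT_induction_right (P := fun x => (vv x = 0 ∨ vv x = 1) ∧ ∀ g ≠ 1,
    (vv g = 1 → vv x = 0 → vv (g⁻¹ * x) = vv g⁻¹) ∧
    (vv g = 0 → vv x = 1 → vv (g⁻¹ * x) = vv (g⁻¹ * cc))) ?_ ?_ ?_ x
  · simp [vv_one]
  · rintro x s hs ⟨h1, h2⟩
    by_cases hc : s = cc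
    · subst hc
      by_cases hx : x = 1
      · subst hx
        simp [vv_cc]
      · rw [vv_mul_cc_of_ne hx]
        refine ⟨h1, fun g hg => ?_⟩
        by_cases hgx : g = x
        · subst hgx
          exact ⟨fun e1 e2 => by omega, fun e1 e2 => by omega⟩
        · rw [← mul_assoc, vv_mul_cc_of_ne (x := g⁻¹ * x)
            (fun h => hgx (inv_mul_eq_one.1 h))]
          exact h2 g hg
    · simp only [← mul_assoc, vv_mul_of_ne hs hc]
      exact ⟨h1, h2⟩
  · rintro x s hs ⟨h1, h2⟩
    obtain ⟨y, rfl⟩ : ∃ y, x = y * s := ⟨x * s⁻¹, by simp⟩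
    rw [mul_inv_cancel_right]
    by_cases hc : s = cc
    · subst hc
      by_cases hx : y = 1
      · subst hx
        simp [vv_one]
      · rw [vv_mul_cc_of_ne hx] at h1 h2
        refine ⟨h1, fun g hg => ?_⟩
        by_cases hgx : g = y
        · subst hgx
          exact ⟨fun e1 e2 => by omega, fun e1 e2 => by omega⟩
        · have := h2 g hg
          rwa [← mul_assoc, vv_mul_cc_of_ne (x := g⁻¹ * y)
            (fun h => hgx (inv_mul_eq_one.1 h))] at this
    · simp only [← mul_assoc, vv_mul_of_ne hs hc] at h1 h2
      exact ⟨h1, h2⟩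

lemma wall_eq (f x : GG) : wall f x = 0 ∨ wall f x = 1 := (vv_nested _).1

lemma wall_mul_left (g f x : GG) : wall (g * f) (g * x) = wall f x := by
  simp [wall, mul_assoc]

lemma wall_self (f : GG) : wall f f = 0 := by simp [wall, vv_one]

lemma wall_self_cc (f : GG) : wall f (f * cc) = 1 := by simp [wall, vv_cc]

lemma wall_mul_of_ne {s : GG} (hs : s ∈ TT) (hc : s ≠ cc) (f x : GG) :
    wall f (x * s) = wall f x := by
  rw [wall, ← mul_assoc, vv_mul_of_ne hs hc, wall]

lemma wall_mul_cc_of_ne {f x : GG} (h : f ≠ x) : wall f (x * cc) = wall f x := by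
  rw [wall, ← mul_assoc, vv_mul_cc_of_ne (fun e => h (inv_mul_eq_one.1 e)), wall]

/-- Distinct walls do not cross: one side of the first lies on a single side of the second. -/
lemma wall_nested {f f' : GG} (h : f ≠ f') : ∃ ε ε' : ℤ, (ε = 0 ∨ ε = 1) ∧
    ∀ x, wall f x = ε → wall f' x = ε' := by
  have hne : f⁻¹ * f' ≠ 1 := fun e => h (inv_mul_eq_one.1 e)
  have e : ∀ x, wall f' x = vv ((f⁻¹ * f')⁻¹ * (f⁻¹ * x)) := fun x => by
    rw [wall]; congr 1; group
  rcases (vv_nested (f⁻¹ * f')).1 with h0 | h1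
  · exact ⟨1, vv ((f⁻¹ * f')⁻¹ * cc), Or.inr rfl,
      fun x hx => by rw [e]; exact ((vv_nested (f⁻¹ * x)).2 _ hne).2 h0 hx⟩
  · exact ⟨0, vv (f⁻¹ * f')⁻¹, Or.inl rfl,
      fun x hx => by rw [e]; exact ((vv_nested (f⁻¹ * x)).2 _ hne).1 h1 hx⟩

/-- The walls separating `x` and `y`. -/
def sep (x y : GG) : Set GG := {f | wall f x ≠ wall f y}

lemma sep_comm (x y : GG) : sep x y = sep y x := by
  ext f; exact ne_comm

lemma sep_subset (x y z : GG) : sep x z ⊆ sep x y ∪ sep y z := by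
  intro f hf
  by_contra hc
  simp only [sep, Set.mem_union, Set.mem_ofPred_eq, not_or, not_not] at hc hf
  exact hf (hc.1.trans hc.2)

lemma sep_step_subset (x : GG) {s : GG} (hs : s ∈ TT) : sep x (x * s) ⊆ {x} := by
  intro f hf
  by_cases hc : s = cc
  · subst hc
    by_contra hfx
    exact hf (wall_mul_cc_of_ne hfx).symm
  · exact absurd (wall_mul_of_ne hs hc f x).symm hf

lemma sep_finite (x y : GG) : (sep x y).Finite := by
  have h : ∀ x, (sep 1 x).Finite := by
    refine TT_induction_right ?_ ?_ ?_
    · simp [sep]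
    · intro x s hs hx
      exact (hx.union ((Set.finite_singleton x).subset (sep_step_subset x hs))).subset
        (sep_subset _ _ _)
    · intro x s hs hx
      obtain ⟨y, rfl⟩ : ∃ y, x = y * s := ⟨x * s⁻¹, by simp⟩
      rw [mul_inv_cancel_right]
      refine (hx.union ((Set.finite_singleton y).subset (sep_step_subset y hs))).subset ?_
      rw [sep_comm y]
      exact sep_subset _ _ _
  refine ((h x).union (h y)).subset ?_
  rw [sep_comm 1 x]
  exact sep_subset _ _ _

/-- The number of walls separating two elements. -/
noncomputable def wd (x y : GG) : ℕ := (sep x y).ncard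

lemma wd_self (x : GG) : wd x x = 0 := by simp [wd, sep]

lemma wd_comm (x y : GG) : wd x y = wd y x := by rw [wd, sep_comm, wd]

lemma wd_mul_left (g x y : GG) : wd (g * x) (g * y) = wd x y := by
  have : sep (g * x) (g * y) = (fun f => g * f) '' sep x y := by
    ext f
    constructor
    · intro hf
      refine ⟨g⁻¹ * f, ?_, by simp⟩
      have hf : wall f (g * x) ≠ wall f (g * y) := hf
      rw [← mul_inv_cancel_left g f, wall_mul_left, wall_mul_left] at hf
      exact hf
    · rintro ⟨f, hf, rfl⟩
      change wall (g * f) (g * x) ≠ wall (g * f) (g * y)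
      rwa [wall_mul_left, wall_mul_left]
  rw [wd, this, Set.ncard_image_of_injective _ (mul_right_injective g), wd]

open Classical in
lemma wd_eq_sum (x y : GG) {U : Finset GG} (hU : sep x y ⊆ U) :
    wd x y = ∑ f ∈ U, if wall f x ≠ wall f y then 1 else 0 := by
  rw [Finset.sum_boole, Nat.cast_id, wd, ← Set.ncard_coe_finset]
  congr 1
  ext f
  simp only [Finset.coe_filter, Set.mem_ofPred_eq]
  exact ⟨fun h => ⟨hU h, h⟩, fun h => h.2⟩

/-- As no two walls cross, at most one of the three splittings of four points into pairs is
realized by walls, which gives the four-point condition with constant `0`. -/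
lemma wd_four_point (w x y z : GG) :
    wd w x + wd y z ≤ max (wd w y + wd x z) (wd w z + wd x y) := by
  classical
  let U : Finset GG := ((sep_finite w x).union <| (sep_finite y z).union <|
    (sep_finite w y).union <| (sep_finite x z).union <| (sep_finite w z).union
    (sep_finite x y)).toFinset
  have hU : ∀ f, f ∈ U ↔ f ∈ sep w x ∪ (sep y z ∪ (sep w y ∪ (sep x z ∪ (sep w z ∪ sep x y)))) :=
    fun f => Set.Finite.mem_toFinset _
  rw [wd_eq_sum w x (U := U) (fun f hf => (hU f).2 (by simp [hf])),
    wd_eq_sum y z (U := U) (fun f hf => (hU f).2 (by simp [hf])),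
    wd_eq_sum w y (U := U) (fun f hf => (hU f).2 (by simp [hf])),
    wd_eq_sum x z (U := U) (fun f hf => (hU f).2 (by simp [hf])),
    wd_eq_sum w z (U := U) (fun f hf => (hU f).2 (by simp [hf])),
    wd_eq_sum x y (U := U) (fun f hf => (hU f).2 (by simp [hf]))]
  simp only [← Finset.sum_add_distrib]
  by_cases h2 : ∃ f, wall f w = wall f y ∧ wall f x = wall f z ∧ wall f w ≠ wall f x
  · refine le_max_of_le_right (Finset.sum_le_sum fun f' _ => ?_)
    obtain ⟨f, f1, f2, f3⟩ := h2
    have h3 : ¬ (wall f' w = wall f' z ∧ wall f' x = wall f' y ∧ wall f' w ≠ wall f' x) := by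
      rintro ⟨k1, k2, k3⟩
      have hne : f ≠ f' := by
        rintro rfl
        exact k3 (by rw [k2, f1])
      obtain ⟨ε, ε', he, hn⟩ := wall_nested hne
      have a1 := hn w
      have a2 := hn x
      have a3 := hn y
      have a4 := hn z
      have b1 := wall_eq f w
      have b2 := wall_eq f x
      omega
    have b1 := wall_eq f' w
    have b2 := wall_eq f' x
    have b3 := wall_eq f' y
    have b4 := wall_eq f' z
    split_ifs <;> omega
  · refine le_max_of_le_left (Finset.sum_le_sum fun f _ => ?_)
    have h3 : ¬ (wall f w = wall f y ∧ wall f x = wall f z ∧ wall f w ≠ wall f x) :=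
      fun h => h2 ⟨f, h⟩
    have b1 := wall_eq f w
    have b2 := wall_eq f x
    have b3 := wall_eq f y
    have b4 := wall_eq f z
    split_ifs <;> omega

lemma wd_triangle (x y z : GG) : wd x z ≤ wd x y + wd y z := by
  have := wd_four_point x z y y
  rw [wd_self, wd_comm z y] at this
  simpa using this

/-- The walls metric is discretely geodesic: along a shortest word from `x` to `y`, no wall is
crossed twice. -/
lemma wd_step (n : ℕ) : ∀ x y, wordDist TT x y = n → wd x y ≠ 0 →
    ∃ w, wd x w = 1 ∧ wd w y + 1 = wd x y := by
  -- the step towards a neighbour `x'` of `x` across a wall separating `x` from `y`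
  have hcross : ∀ x x' y f, sep x x' = {f} → f ∈ sep x y → wd x x' = 1 ∧ wd x' y + 1 = wd x y := by
    intro x x' y f hf hy
    refine ⟨by rw [wd, hf, Set.ncard_singleton], ?_⟩
    have hfx : f ∈ sep x x' := by rw [hf]; rfl
    have : sep x' y = sep x y \ {f} := by
      ext g
      by_cases hgf : g = f
      · subst hgf
        have h1 : wall g x ≠ wall g x' := hfx
        have h2 : wall g x ≠ wall g y := hy
        have b1 := wall_eq g x
        have b2 := wall_eq g x'
        have b3 := wall_eq g y
        have h3 : ¬ (wall g x' ≠ wall g y) := by omega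
        exact ⟨fun h => absurd h h3, fun h => absurd rfl h.2⟩
      · have h1 : g ∉ sep x x' := by rw [hf]; exact hgf
        simp only [sep, Set.mem_ofPred_eq, not_not] at h1
        simp [sep, h1, hgf]
    rw [wd, this]
    exact Set.ncard_sdiff_singleton_add_one hy (sep_finite x y)
  have hsep : ∀ x, sep x (x * cc) = {x} := by
    intro x
    refine (sep_step_subset x cc_mem).antisymm ?_
    rintro _ rfl
    simp [sep, wall_self, wall_self_cc]
  induction n with
  | zero =>
    intro x y h h0
    rw [eq_of_wordDist_eq_zero TT_closure h, wd_self] at h0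
    exact absurd rfl h0
  | succ n ih =>
    intro x y hxy h0
    -- crossing the wall of `f` takes one along the edge from `f` to `f * cc`
    have hcr : ∀ f a, wall f a ≠ wall f y → wordDist TT f y ≤ wordDist TT a y ∧
        wordDist TT (f * cc) y ≤ wordDist TT a y := by
      classical
      intro f a hfa
      obtain ⟨z, h1, -, h2, h3⟩ := exists_crossing TT_closure (t := cc) (u := wall f)
        (I := fun z => if f = z then 1 else 0) (fun s hs hc x => wall_mul_of_ne hs hc f x)
        (fun x => by
          split_ifs with h
          · rw [h, wall_self, wall_self_cc]; rfl
          · rw [wall_mul_cc_of_ne h, add_zero]) cc_mem hfa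
      have : f = z := by
        by_contra hc
        exact h1 (if_neg hc)
      subst this
      exact ⟨h2, h3⟩
    obtain ⟨s, hs, h | h⟩ := exists_first_step TT_closure hxy
    · by_cases hc : s = cc
      · subst hc
        by_cases hxs : x ∈ sep x y
        · exact ⟨_, hcross x (x * cc) y x (hsep x) hxs⟩
        · have hxs' : wall x x = wall x y := not_not.1 hxs
          have := (hcr x (x * cc) (by rw [wall_self_cc, ← hxs', wall_self]; exact one_ne_zero)).1
          omega
      · have e : ∀ y, wd (x * s) y = wd x y := fun y => by
          simp [wd, sep, wall_mul_of_ne hs hc]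
        obtain ⟨w, h1, h2⟩ := ih (x * s) y h (by rwa [e])
        rw [e] at h1 h2
        exact ⟨w, h1, h2⟩
    · obtain ⟨x', rfl⟩ : ∃ x', x = x' * s := ⟨x * s⁻¹, by simp⟩
      rw [mul_inv_cancel_right] at h
      by_cases hc : s = cc
      · subst hc
        by_cases hxs : x' ∈ sep (x' * cc) y
        · exact ⟨_, hcross (x' * cc) x' y x' (by rw [sep_comm, hsep]) hxs⟩
        · have hxs' : wall x' (x' * cc) = wall x' y := not_not.1 hxs
          have := (hcr x' x' (by rw [← hxs', wall_self_cc, wall_self]; exact zero_ne_one)).2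
          omega
      · have e : ∀ y, wd (x' * s) y = wd x' y := fun y => by
          simp [wd, sep, wall_mul_of_ne hs hc]
        rw [e] at h0
        obtain ⟨w, h1, h2⟩ := ih x' y h h0
        exact ⟨w, by rw [e]; exact h1, by rw [e]; exact h2⟩

lemma wd_between (x y : GG) (m : ℕ) (hm : m ≤ wd x y) : ∃ w, wd x w = m ∧ wd w y + m = wd x y := by
  induction m with
  | zero => exact ⟨x, wd_self x, by simp⟩
  | succ m ih =>
    obtain ⟨w, h1, h2⟩ := ih (by omega)
    obtain ⟨w', h3, h4⟩ := wd_step _ w y rfl (by omega)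
    have h5 := wd_triangle x w w'
    have h6 := wd_triangle x w' y
    exact ⟨w', by omega, by omega⟩

/-- An element moving both ends of a segment of length `2 R + 1` by at most `R` maps one of the
walls separating them to another one. Since walls have trivial stabilizers, there are only boundedly
many such elements. -/
lemma wd_acylindrical (R : ℕ) (x y : GG) (h : 2 * R + 1 ≤ wd x y) :
    {g : GG | wd x (g * x) ≤ R ∧ wd y (g * y) ≤ R}.Finite ∧
      {g : GG | wd x (g * x) ≤ R ∧ wd y (g * y) ≤ R}.ncard ≤ (2 * R + 1) * (2 * R + 1) := by
  obtain ⟨w, h1, h2⟩ := wd_between x y _ h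
  have hsub : {g : GG | wd x (g * x) ≤ R ∧ wd y (g * y) ≤ R} ⊆
      (fun p : GG × GG => p.1 * p.2⁻¹) '' (sep x w ×ˢ sep x w) := by
    rintro g ⟨hx, hy⟩
    have hw : wd w (g * w) ≤ R := by
      have e1 := wd_four_point (g * w) w x y
      have e2 := wd_triangle (g * w) (g * x) x
      have e3 := wd_triangle (g * w) (g * y) y
      rw [wd_mul_left] at e2 e3
      rw [wd_comm w x, wd_comm (g * w) w] at e1
      rw [wd_comm w x, wd_comm (g * x) x] at e2
      rw [wd_comm (g * y) y] at e3
      rcases le_max_iff.1 e1 with e1 | e1 <;> omega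
    have : ∃ f ∈ sep x w, f ∉ sep x (g * x) ∪ sep (g * w) w := by
      by_contra! hc
      have e1 := Set.ncard_le_ncard hc ((sep_finite _ _).union (sep_finite _ _))
      have e2 := Set.ncard_union_le (sep x (g * x)) (sep (g * w) w)
      change wd x w ≤ _ at e1
      change _ ≤ wd x (g * x) + wd (g * w) w at e2
      rw [wd_comm (g * w) w] at e2
      omega
    obtain ⟨f, hf, hf'⟩ := this
    refine ⟨(f, g⁻¹ * f), ⟨hf, ?_⟩, by simp⟩
    simp only [sep, Set.mem_union, Set.mem_ofPred_eq, not_or, not_not] at hf' hf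
    change wall (g⁻¹ * f) x ≠ wall (g⁻¹ * f) w
    rw [← wall_mul_left g, ← wall_mul_left g (g⁻¹ * f) w, mul_inv_cancel_left, ← hf'.1, hf'.2]
    exact hf
  have hfin : ((fun p : GG × GG => p.1 * p.2⁻¹) '' (sep x w ×ˢ sep x w)).Finite :=
    ((sep_finite x w).prod (sep_finite x w)).image _
  refine ⟨hfin.subset hsub, (Set.ncard_le_ncard hsub hfin).trans ?_⟩
  refine (Set.ncard_image_le ((sep_finite x w).prod (sep_finite x w))).trans ?_
  rw [Set.ncard_prod]
  change wd x w * wd x w ≤ _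
  rw [h1]

lemma vv_cc_pow (n : ℕ) : vv (cc ^ (n + 1)) = 1 ∧ vv (cc ^ n)⁻¹ = 0 := by
  have hne : ∀ n : ℕ, cc ^ (n + 1) ≠ 1 := by
    intro n h
    have := congrArg (fun g => Multiplicative.toAdd (cExp g)) h
    simp at this
    omega
  induction n with
  | zero => simp [vv_cc, vv_one]
  | succ n ih =>
    constructor
    · rw [pow_succ, vv_mul_cc_of_ne (hne n), ih.1]
    · rw [← ih.2, ← vv_mul_cc_of_ne (inv_ne_one.2 (hne n)), pow_succ']
      congr 1
      group

lemma wd_unbounded (n : ℕ) : n ≤ wd 1 (cc ^ n) := by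
  have hinj : Function.Injective (fun i : ℕ => cc ^ i) := by
    intro i j h
    have := congrArg (fun g => Multiplicative.toAdd (cExp g)) h
    simpa using this
  have hsub : (fun i : ℕ => cc ^ i) '' (Finset.range n : Set ℕ) ⊆ sep 1 (cc ^ n) := by
    rintro _ ⟨i, hi, rfl⟩
    have hi : i < n := by simpa using hi
    obtain ⟨k, rfl⟩ := Nat.exists_eq_add_of_lt hi
    have e : (cc ^ i)⁻¹ * cc ^ (i + k + 1) = cc ^ (k + 1) := by
      rw [add_assoc, pow_add, inv_mul_cancel_left]
    change wall (cc ^ i) 1 ≠ wall (cc ^ i) (cc ^ (i + k + 1))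
    rw [wall, wall, e, mul_one, (vv_cc_pow k).1, (vv_cc_pow i).2]
    exact zero_ne_one
  have := Set.ncard_le_ncard hsub (sep_finite _ _)
  rwa [Set.ncard_image_of_injective _ hinj, Set.ncard_coe_finset, Finset.card_range] at this

/-! ### The real tree spanned by the tree metric, and the action of `GG` on it -/

lemma wd_four_point_real (w x y z : GG) :
    (wd w x : ℝ) + wd y z ≤ max ((wd w y : ℝ) + wd x z) (wd w z + wd x y) := by
  exact_mod_cast wd_four_point w x y z

lemma wd_triangle_real (x y z : GG) : (wd x z : ℝ) ≤ wd x y + wd y z := by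
  exact_mod_cast wd_triangle x y z

lemma wd_comm_real (x y : GG) : (wd x y : ℝ) = wd y x := by rw [wd_comm]

/-- The points of the real tree spanned by `(GG, wd)`, as a subset of the tight span. A point is
encoded by its distance function `f` to the elements of `GG`; the second condition says that the
point lies on a segment, whose ends are `u` and `v`. -/
def TreePt : Type := {f : GG → ℝ // (∀ x y, (wd x y : ℝ) ≤ f x + f y) ∧
  ∃ u v, ∀ z, f z + f u = wd z u ∨ f z + f v = wd z v}

namespace TreePt

/-- The distance from a point of the tree to an element of `GG`. -/
def ev (f : TreePt) (z : GG) : ℝ := f.1 z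

lemma wd_le (f : TreePt) (x y : GG) : (wd x y : ℝ) ≤ f.ev x + f.ev y := f.2.1 x y

lemma ends (f : TreePt) : ∃ u v, ∀ z, f.ev z + f.ev u = wd z u ∨ f.ev z + f.ev v = wd z v := f.2.2

lemma exists_end (f : TreePt) (z : GG) : ∃ e, f.ev z + f.ev e = wd z e := by
  obtain ⟨u, v, h⟩ := f.ends
  rcases h z with h | h
  · exact ⟨u, h⟩
  · exact ⟨v, h⟩

lemma ev_nonneg (f : TreePt) (x : GG) : 0 ≤ f.ev x := by
  have := f.wd_le x x
  rw [wd_self] at this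
  push_cast at this
  linarith

lemma ext_ev {f g : TreePt} (h : ∀ z, f.ev z = g.ev z) : f = g := Subtype.ext (funext h)

/-- The supremum of the differences of two points is attained, at an element `y` such that the
segment from `y` to some `x` passes through both points. -/
lemma exists_max (f g : TreePt) : ∃ x y, ∀ z, |f.ev z - g.ev z| ≤ wd x y - f.ev x - g.ev y := by
  -- for each `f` there is an end which maximizes `g - f`, and which bounds `f - g` by the maximum
  have key : ∀ f g : TreePt, ∃ e, ∀ z, f.ev z - g.ev z ≤ g.ev e - f.ev e := by
    intro f g
    obtain ⟨u, v, h⟩ := f.ends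
    rcases le_total (g.ev u - f.ev u) (g.ev v - f.ev v) with huv | huv
    · refine ⟨v, fun z => ?_⟩
      have h1 := g.wd_le z u
      have h2 := g.wd_le z v
      rcases h z with h | h <;> linarith
    · refine ⟨u, fun z => ?_⟩
      have h1 := g.wd_le z u
      have h2 := g.wd_le z v
      rcases h z with h | h <;> linarith
  obtain ⟨p, hp⟩ := key f g
  obtain ⟨q, hq⟩ := key g f
  obtain ⟨e, he⟩ := g.exists_end p
  refine ⟨p, e, fun z => ?_⟩
  have h1 := hp z
  have h2 := hq z
  have h3 := hp q
  rw [abs_le]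
  constructor <;> linarith

noncomputable instance : Dist TreePt := ⟨fun f g => ⨆ z, |f.ev z - g.ev z|⟩

lemma dist_def (f g : TreePt) : dist f g = ⨆ z, |f.ev z - g.ev z| := rfl

lemma abs_le_dist (f g : TreePt) (z : GG) : |f.ev z - g.ev z| ≤ dist f g := by
  obtain ⟨x, y, h⟩ := exists_max f g
  exact le_ciSup (f := fun z => |f.ev z - g.ev z|) ⟨_, by rintro _ ⟨z, rfl⟩; exact h z⟩ z

lemma dist_le {f g : TreePt} {r : ℝ} (h : ∀ z, |f.ev z - g.ev z| ≤ r) : dist f g ≤ r :=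
  ciSup_le h

/-- Any two points of the tree lie, in this order, on a segment between two elements of `GG`. -/
lemma exists_segment (f g : TreePt) : ∃ x y, (wd x y : ℝ) = f.ev x + dist f g + g.ev y := by
  obtain ⟨x, y, h⟩ := exists_max f g
  refine ⟨x, y, le_antisymm ?_ ?_⟩
  · have h1 := (le_abs_self _).trans (abs_le_dist f g y)
    have h2 := f.wd_le x y
    linarith
  · have := dist_le h
    linarith

noncomputable instance : MetricSpace TreePt where
  dist_self f := by simp [dist_def]
  dist_comm f g := by simp only [dist_def, abs_sub_comm]
  dist_triangle f g h := dist_le fun z =>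
    (abs_sub_le _ (g.ev z) _).trans (add_le_add (abs_le_dist f g z) (abs_le_dist g h z))
  eq_of_dist_eq_zero {f g} h := ext_ev fun z => by
    have := abs_le_dist f g z
    rw [h] at this
    exact sub_eq_zero.1 (abs_nonpos_iff.1 this)

lemma hyperbolic : GromovHyperbolicD (fun a b : TreePt => dist a b) := by
  refine ⟨0, le_rfl, fun f g h k => ?_⟩
  obtain ⟨w, x, hwx⟩ := exists_segment f g
  obtain ⟨y, z, hyz⟩ := exists_segment h k
  have key : ∀ (f g : TreePt) x y, (wd x y : ℝ) ≤ f.ev x + dist f g + g.ev y := fun f g x y => by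
    have h1 := (le_abs_self _).trans (abs_le_dist f g y)
    have h2 := f.wd_le x y
    linarith
  have h1 := key f h w y
  have h2 := key g k x z
  have h3 := key f k w z
  have h4 := key g h x y
  rw [mul_zero, add_zero, le_max_iff]
  rcases le_max_iff.1 (wd_four_point_real w x y z) with h5 | h5
  · left; linarith
  · right; linarith

/-- A point on the segment from `x` to `y` is determined by its distances to `x` and `y`. -/
lemma ev_eq_max (f : TreePt) {x y : GG} (h : f.ev x + f.ev y = wd x y) (z : GG) :
    f.ev z = max (wd x z - f.ev x) (wd y z - f.ev y) := by
  obtain ⟨e, he⟩ := f.exists_end z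
  refine le_antisymm ?_ (max_le ?_ ?_)
  · have h1 := f.wd_le e x
    have h2 := f.wd_le e y
    rw [le_max_iff]
    rw [wd_comm_real x z, wd_comm_real y z]
    rcases le_max_iff.1 (wd_four_point_real z e x y) with h5 | h5
    · left; linarith
    · right; linarith
  · have := f.wd_le x z; linarith
  · have := f.wd_le y z; linarith

/-- The point on the segment from `x` to `y` at distance `s` from `x`. -/
noncomputable def pt (x y : GG) (s : ℝ) (h0 : 0 ≤ s) (h1 : s ≤ wd x y) : TreePt :=
  ⟨fun z => max (wd x z - s) (wd y z - (wd x y - s)), by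
    constructor
    · intro z w
      dsimp only
      have a1 := le_max_left ((wd x z : ℝ) - s) (wd y z - (wd x y - s))
      have a2 := le_max_right ((wd x z : ℝ) - s) (wd y z - (wd x y - s))
      have a3 := le_max_left ((wd x w : ℝ) - s) (wd y w - (wd x y - s))
      have a4 := le_max_right ((wd x w : ℝ) - s) (wd y w - (wd x y - s))
      rcases le_max_iff.1 (wd_four_point_real z w x y) with h5 | h5
      · rw [wd_comm_real z x, wd_comm_real w y] at h5
        linarith
      · rw [wd_comm_real z y, wd_comm_real w x] at h5
        linarith
    · have hx : max ((wd x x : ℝ) - s) (wd y x - (wd x y - s)) = s := by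
        rw [wd_self, wd_comm_real y x]
        push_cast
        rw [max_eq_right] <;> linarith
      have hy : max ((wd x y : ℝ) - s) (wd y y - (wd x y - s)) = wd x y - s := by
        rw [wd_self]
        push_cast
        rw [max_eq_left]
        linarith
      refine ⟨x, y, fun z => ?_⟩
      dsimp only
      rw [hx, hy, wd_comm_real z x, wd_comm_real z y]
      rcases max_choice ((wd x z : ℝ) - s) (wd y z - (wd x y - s)) with h | h
      · left; rw [h]; ring
      · right; rw [h]; ring⟩

lemma pt_ev (x y : GG) (s : ℝ) (h0 : 0 ≤ s) (h1 : s ≤ wd x y) (z : GG) :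
    (pt x y s h0 h1).ev z = max (wd x z - s) (wd y z - (wd x y - s)) := rfl

lemma pt_ev_left (x y : GG) (s : ℝ) (h0 : 0 ≤ s) (h1 : s ≤ wd x y) :
    (pt x y s h0 h1).ev x = s := by
  rw [pt_ev, wd_self, wd_comm_real y x]
  push_cast
  rw [max_eq_right] <;> linarith

lemma dist_pt (x y : GG) (s t : ℝ) (h0 : 0 ≤ s) (h1 : s ≤ wd x y) (h2 : 0 ≤ t)
    (h3 : t ≤ wd x y) : dist (pt x y s h0 h1) (pt x y t h2 h3) = |s - t| := by
  refine le_antisymm (dist_le fun z => ?_) ?_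
  · rw [pt_ev, pt_ev]
    refine (abs_max_sub_max_le_max _ _ _ _).trans (max_le ?_ ?_)
    · rw [abs_sub_comm s t]
      exact le_of_eq (congrArg _ (by ring))
    · exact le_of_eq (congrArg _ (by ring))
  · have := abs_le_dist (pt x y s h0 h1) (pt x y t h2 h3) x
    rwa [pt_ev_left, pt_ev_left] at this

lemma geodesic : GeodesicSpace TreePt := by
  intro f g
  obtain ⟨x, y, hxy⟩ := exists_segment f g
  have hfy := (le_abs_self _).trans (abs_le_dist f g y)
  have hgx := (neg_le_abs _).trans (abs_le_dist f g x)
  have hf := f.wd_le x y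
  have hg := g.wd_le x y
  have hf0 := f.ev_nonneg x
  have hg0 := g.ev_nonneg y
  have hd : 0 ≤ dist f g := dist_nonneg
  have hmem : ∀ τ : ℝ, τ ∈ Set.Icc 0 (dist f g) → f.ev x + τ ≤ wd x y := fun τ hτ => by
    linarith [hτ.2]
  have hmem0 : ∀ τ : ℝ, τ ∈ Set.Icc 0 (dist f g) → 0 ≤ f.ev x + τ := fun τ hτ => by
    linarith [hτ.1]
  classical
  refine ⟨fun τ => if h : τ ∈ Set.Icc 0 (dist f g) then
    pt x y (f.ev x + τ) (hmem0 τ h) (hmem τ h) else f, ?_, ?_, ?_⟩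
  · have h : (0 : ℝ) ∈ Set.Icc 0 (dist f g) := ⟨le_rfl, hd⟩
    simp only [dif_pos h]
    refine ext_ev fun z => ?_
    rw [pt_ev, f.ev_eq_max (x := x) (y := y) (by linarith) z]
    congr 1 <;> linarith
  · have h : dist f g ∈ Set.Icc 0 (dist f g) := ⟨hd, le_rfl⟩
    simp only [dif_pos h]
    refine ext_ev fun z => ?_
    rw [pt_ev, g.ev_eq_max (x := x) (y := y) (by linarith) z]
    congr 1 <;> linarith
  · intro s t hs ht
    simp only [dif_pos hs, dif_pos ht]
    rw [dist_pt]
    congr 1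
    ring

/-- The action of `GG` on the tree. -/
noncomputable def act (g : GG) (f : TreePt) : TreePt :=
  ⟨fun z => f.ev (g⁻¹ * z), by
    constructor
    · intro x y
      rw [← wd_mul_left g⁻¹]
      exact f.wd_le _ _
    · obtain ⟨u, v, h⟩ := f.ends
      refine ⟨g * u, g * v, fun z => ?_⟩
      rw [← wd_mul_left g⁻¹ z, ← wd_mul_left g⁻¹ z, inv_mul_cancel_left, inv_mul_cancel_left]
      dsimp only
      rw [inv_mul_cancel_left, inv_mul_cancel_left]
      exact h _⟩

lemma act_ev (g : GG) (f : TreePt) (z : GG) : (act g f).ev z = f.ev (g⁻¹ * z) := rfl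

lemma act_isometric : IsIsometricAction act := by
  refine ⟨fun f => ext_ev fun z => ?_, fun g h f => ext_ev fun z => ?_, fun g f k => ?_⟩
  · rw [act_ev, inv_one, one_mul]
  · rw [act_ev, act_ev, act_ev, mul_inv_rev, mul_assoc]
  · refine le_antisymm (dist_le fun z => abs_le_dist f k _) (dist_le fun z => ?_)
    have := abs_le_dist (act g f) (act g k) (g * z)
    rwa [act_ev, act_ev, inv_mul_cancel_left] at this

/-- Each point of the tree lies at distance at most `1` from an element of `GG`. -/
lemma exists_near (f : TreePt) : ∃ w, f.ev w ≤ 1 := by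
  obtain ⟨e, he⟩ := f.exists_end 1
  have h0 := f.ev_nonneg 1
  have h1 := f.ev_nonneg e
  have h2 := Nat.floor_le h0
  have h3 := Nat.lt_floor_add_one (f.ev 1)
  obtain ⟨w, h4, h5⟩ := wd_between 1 e ⌊f.ev 1⌋₊ (by
    have : (⌊f.ev 1⌋₊ : ℝ) ≤ wd 1 e := by linarith
    exact_mod_cast this)
  have h5 : (wd w e : ℝ) + ⌊f.ev 1⌋₊ = wd 1 e := by exact_mod_cast h5
  refine ⟨w, ?_⟩
  rw [f.ev_eq_max he, h4, wd_comm_real e w]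
  refine max_le ?_ ?_ <;> linarith

lemma act_acylindrical : AcylindricalAction act := by
  intro R hR
  let n : ℕ := ⌈R⌉₊ + 2
  have hn : R + 2 ≤ n := by
    have := Nat.le_ceil R
    simp only [n]
    push_cast
    linarith
  refine ⟨(2 * n + 1) * (2 * n + 1), 2 * n + 1 + 2, by positivity, by positivity, fun f k hfk => ?_⟩
  obtain ⟨w, hw⟩ := f.exists_near
  obtain ⟨x, hx⟩ := k.exists_near
  have hwx : 2 * n + 1 ≤ wd w x := by
    obtain ⟨p, q, hpq⟩ := exists_segment f k
    have h1 := wd_triangle_real p w q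
    have h2 := wd_triangle_real w x q
    have h3 := f.wd_le p w
    have h4 := k.wd_le x q
    have : (2 * n + 1 : ℝ) ≤ wd w x := by linarith
    exact_mod_cast this
  have hmove : ∀ (f : TreePt) w g, f.ev w ≤ 1 → dist f (act g f) ≤ R → wd w (g * w) ≤ n := by
    intro f w g hw hg
    have h1 := f.wd_le w (g * w)
    have h2 := (le_abs_self _).trans (abs_le_dist f (act g f) (g * w))
    rw [act_ev, inv_mul_cancel_left] at h2
    have : (wd w (g * w) : ℝ) ≤ n := by linarith
    exact_mod_cast this
  obtain ⟨h1, h2⟩ := wd_acylindrical n w x hwx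
  have hsub : {g : GG | dist f (act g f) ≤ R ∧ dist k (act g k) ≤ R} ⊆
      {g : GG | wd w (g * w) ≤ n ∧ wd x (g * x) ≤ n} :=
    fun g hg => ⟨hmove f w g hw hg.1, hmove k x g hx hg.2⟩
  exact ⟨h1.subset hsub, (Set.ncard_le_ncard hsub h1).trans h2⟩

lemma act_unbounded : ∃ x : TreePt, ∀ R : ℝ, ∃ g : GG, R < dist x (act g x) := by
  refine ⟨pt 1 1 0 le_rfl (Nat.cast_nonneg _), fun R => ?_⟩
  obtain ⟨n, hn⟩ := exists_nat_gt R
  refine ⟨(cc ^ n)⁻¹, hn.trans_le ?_⟩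
  refine le_trans ?_ (abs_le_dist _ _ 1)
  rw [act_ev, pt_ev, pt_ev, abs_sub_comm]
  refine le_trans ?_ (le_abs_self _)
  have := wd_unbounded n
  simp only [wd_self, inv_inv, mul_one, sub_zero, max_self, CharP.cast_eq_zero]
  exact_mod_cast this

end TreePt

/-- There is an acylindrically hyperbolic group `G` with a stable infinite
cyclic subgroup `⟨q⟩` such that no acylindrical action of `G` on a geodesic hyperbolic space
recognizes `⟨q⟩`. -/
theorem exists_acylindrically_hyperbolic_group_with_unrecognized_stable_subgroup :
    ∃ (G : Type) (_ : Group G) (T : Set G) (q : G),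
      T.Finite ∧ Subgroup.closure T = ⊤ ∧
      ¬ IsOfFinOrder q ∧
      -- `K = ⟨q⟩` is stable in `G` with respect to `T`
      Stable T (Subgroup.zpowers q) {⟨q, Subgroup.mem_zpowers q⟩} ∧
      -- `G` is acylindrically hyperbolic
      ¬ VirtuallyCyclic G ∧
      (∃ (X : Type) (_ : MetricSpace X), GeodesicSpace X ∧
        GromovHyperbolicD (fun a b : X => dist a b) ∧
        ∃ φ : G → X → X, IsIsometricAction φ ∧ AcylindricalAction φ ∧
          ∃ x : X, ∀ R : ℝ, ∃ g : G, R < dist x (φ g x)) ∧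
      -- yet no acylindrical action on a geodesic hyperbolic space recognizes `⟨q⟩`
      (∀ (X : Type) [MetricSpace X], GeodesicSpace X →
        GromovHyperbolicD (fun a b : X => dist a b) →
        ∀ φ : G → X → X, IsIsometricAction φ → AcylindricalAction φ →
          ∀ x : X, ¬ IsQIE (fun m n : ℤ => |(m : ℝ) - (n : ℝ)|)
              (fun a b : X => dist a b) (fun n : ℤ => φ (q ^ n) x)) := by
  exact ⟨GG, inferInstance, TT, qq, TT_finite, TT_closure, qq_not_finOrder, stable_qq,
    not_virtuallyCyclic, ⟨TreePt, inferInstance, TreePt.geodesic, TreePt.hyperbolic, TreePt.act,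
      TreePt.act_isometric, TreePt.act_acylindrical, TreePt.act_unbounded⟩,
    fun X _ => not_recognized X⟩
end

section
/- Let H be a group with generating set S ⊆ H, and let G = H * ℤ be the free product of H with the infinite cyclic group generated by y; identify H and y with their images in G. Then for all h, h' ∈ H, the word metric of G with respect to S ∪ {y} satisfies d_{S∪{y}}(h, h') = d_S(h, h'); that is, (H, d_S) is isometrically embedded in (G, d_{S∪{y}}) via the inclusion. -/
/-- Deleting the letters `y` and `y⁻¹` from a word in `S ∪ {y}` gives a word in `S` that is no
longer and represents the image under the retraction `H * ℤ → H`. -/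
lemma exists_word_retract {H : Type*} [Group H] (S : Set H) (l : List (FPZ H))
    (hl : ∀ x ∈ l, x ∈ ((⇑(fpzInl H)) '' S ∪ {fpzY H}) ∪ ((⇑(fpzInl H)) '' S ∪ {fpzY H})⁻¹) :
    ∃ l' : List H, l'.length ≤ l.length ∧ (∀ x ∈ l', x ∈ S ∪ S⁻¹) ∧
      l'.prod = Monoid.Coprod.fst l.prod := by
  induction l with
  | nil => exact ⟨[], by simp⟩
  | cons a l ih =>
    obtain ⟨l', hlen, hmem, hprod⟩ := ih fun x hx => hl x (List.mem_cons_of_mem _ hx)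
    have key : Monoid.Coprod.fst a = 1 ∨ Monoid.Coprod.fst a ∈ S ∪ S⁻¹ := by
      rcases hl a List.mem_cons_self with (⟨s, hs, rfl⟩ | rfl) | (⟨s, hs, hsa⟩ | hya)
      · right; left; simpa [fpzInl] using hs
      · left; simp [fpzY]
      · right; right
        have h2 : a = (fpzInl H s)⁻¹ := by rw [hsa, inv_inv]
        subst h2
        simpa [fpzInl] using hs
      · left
        have h2 : a = (fpzY H)⁻¹ := by rw [← Set.mem_singleton_iff.1 hya, inv_inv]
        subst h2
        simp [fpzY]
    rcases key with h1 | h1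
    · exact ⟨l', by simp; omega, hmem, by simp [h1, hprod]⟩
    · refine ⟨Monoid.Coprod.fst a :: l', by simpa using hlen, ?_, by simp [hprod]⟩
      intro x hx
      rcases List.mem_cons.1 hx with rfl | hx
      · exact h1
      · exact hmem x hx

/-- `(H, d_S)` embeds isometrically in `(H * ℤ, d_{S ∪ {y}})`. -/
theorem wordDist_coprod_eq_wordDist (H : Type*) [Group H] (S : Set H)
    (hS : Subgroup.closure S = ⊤) (h h' : H) :
    wordDist ((⇑(fpzInl H)) '' S ∪ {fpzY H}) (fpzInl H h) (fpzInl H h')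
      = wordDist S h h' := by
  have h_up : ∀ n, (∃ l : List H, l.length = n ∧ (∀ x ∈ l, x ∈ S ∪ S⁻¹) ∧ l.prod = h⁻¹ * h') →
      ∃ l : List (FPZ H), l.length = n ∧
        (∀ x ∈ l, x ∈ ((⇑(fpzInl H)) '' S ∪ {fpzY H}) ∪ ((⇑(fpzInl H)) '' S ∪ {fpzY H})⁻¹) ∧
        l.prod = (fpzInl H h)⁻¹ * fpzInl H h' := by
    rintro n ⟨l, rfl, hmem, hprod⟩
    refine ⟨l.map (fpzInl H), by simp, ?_, by rw [← map_list_prod, hprod, map_mul, map_inv]⟩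
    intro x hx
    obtain ⟨s, hs, rfl⟩ := List.mem_map.1 hx
    rcases hmem s hs with hs | hs
    · exact Or.inl (Or.inl ⟨s, hs, rfl⟩)
    · exact Or.inr (Or.inl ⟨s⁻¹, hs, map_inv _ _⟩)
  have h_down : ∀ n, (∃ l : List (FPZ H), l.length = n ∧
        (∀ x ∈ l, x ∈ ((⇑(fpzInl H)) '' S ∪ {fpzY H}) ∪ ((⇑(fpzInl H)) '' S ∪ {fpzY H})⁻¹) ∧
        l.prod = (fpzInl H h)⁻¹ * fpzInl H h') → ∃ m ≤ n,
      ∃ l : List H, l.length = m ∧ (∀ x ∈ l, x ∈ S ∪ S⁻¹) ∧ l.prod = h⁻¹ * h' := by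
    rintro n ⟨l, rfl, hmem, hprod⟩
    obtain ⟨l', hlen, hmem', hprod'⟩ := exists_word_retract S l hmem
    exact ⟨l'.length, hlen, l', rfl, hmem', by rw [hprod', hprod]; simp [fpzInl]⟩
  unfold wordDist
  rcases Set.eq_empty_or_nonempty {n : ℕ | ∃ l : List H, l.length = n ∧
    (∀ x ∈ l, x ∈ S ∪ S⁻¹) ∧ l.prod = h⁻¹ * h'} with he | hne
  -- With no word in `S` for `h⁻¹ * h'` there is none in `S ∪ {y}`: both infima are `sInf ∅`.
  · rw [he]
    congr 1
    refine Set.eq_empty_of_forall_notMem fun n hn => ?_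
    obtain ⟨m, -, hm⟩ := h_down n hn
    exact Set.eq_empty_iff_forall_notMem.1 he m hm
  · refine le_antisymm (Nat.sInf_le (h_up _ (Nat.sInf_mem hne))) ?_
    obtain ⟨m, hmn, hm⟩ := h_down _ (Nat.sInf_mem (hne.mono h_up))
    exact (Nat.sInf_le hm).trans hmn
end

section
/- Let H be a group with generating set S ⊆ H, and let G = H * ℤ be the free product of H with the infinite cyclic group generated by y. Suppose g_0, g_1, …, g_n is an edge-path in the Cayley graph of G with respect to S ∪ {y} (that is, g_i⁻¹·g_{i+1} ∈ (S ∪ {y}) ∪ (S ∪ {y})⁻¹ for each 0 ≤ i < n), whose endpoints g_0 and g_n lie in the subgroup H, and such that g_j ∉ H for some 0 < j < n. Then the path visits some vertex twice: there exist indices i < k with g_i = g_k. -/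
open Classical in
/-- The permutation of `(H * ℤ) × ℤ` by which `y` acts: left translation by `y` on the first
coordinate, lowering the second coordinate by one when the translate is `a⁻¹`. -/
noncomputable def yPerm {H : Type*} [Group H] (a : FPZ H) : Equiv.Perm (FPZ H × ℤ) where
  toFun p := (fpzY H * p.1, p.2 - if fpzY H * p.1 = a⁻¹ then 1 else 0)
  invFun p := ((fpzY H)⁻¹ * p.1, p.2 + if p.1 = a⁻¹ then 1 else 0)
  left_inv p := by simp
  right_inv p := by simp

/-- The action of `H * ℤ` on `(H * ℤ) × ℤ` extending the left translation action of `H` on the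
first coordinate and the action `yPerm a` of `y`. -/
noncomputable def edgeAction {H : Type*} [Group H] (a : FPZ H) :
    FPZ H →* Equiv.Perm (FPZ H × ℤ) :=
  Monoid.Coprod.lift
    { toFun := fun h => (Equiv.mulLeft (fpzInl H h)).prodCongr (Equiv.refl ℤ)
      map_one' := by ext p <;> simp
      map_mul' := fun h k => by ext p <;> simp [mul_assoc] }
    (zpowersHom _ (yPerm a))

lemma edgeAction_inl {H : Type*} [Group H] (a : FPZ H) (h : H) (p : FPZ H × ℤ) :
    edgeAction a (fpzInl H h) p = (fpzInl H h * p.1, p.2) := by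
  simp [edgeAction, fpzInl, Prod.map]

lemma edgeAction_y {H : Type*} [Group H] (a : FPZ H) :
    edgeAction a (fpzY H) = yPerm a := by
  simp [edgeAction, fpzY]

lemma edgeAction_fst {H : Type*} [Group H] (a g : FPZ H) (p : FPZ H × ℤ) :
    (edgeAction a g p).1 = g * p.1 := by
  -- Both sides are actions on the first coordinate, so it suffices to compare on the two factors.
  induction g using Monoid.Coprod.induction_on generalizing p with
  | inl h => exact congrArg Prod.fst (edgeAction_inl a h p)
  | inr z =>
    have key : ∀ m : ℤ, ∀ p : FPZ H × ℤ, ((yPerm a ^ m) p).1 = fpzY H ^ m * p.1 := by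
      intro m
      induction m using Int.induction_on with
      | zero => simp
      | succ m ih =>
        intro p
        rw [zpow_add_one, zpow_add_one, Equiv.Perm.mul_apply, ih]
        simp [yPerm, mul_assoc]
      | pred m ih =>
        intro p
        rw [zpow_sub_one, zpow_sub_one, Equiv.Perm.mul_apply, ih, Equiv.Perm.inv_def]
        simp [yPerm, mul_assoc]
    have hz : (Monoid.Coprod.inr z : FPZ H) = fpzY H ^ (Multiplicative.toAdd z) := by
      rw [fpzY, ← map_zpow, ← ofAdd_zsmul]; simp
    rw [hz, map_zpow, edgeAction_y, key]
  | mul x y hx hy => rw [map_mul, Equiv.Perm.mul_apply, hx, hy, mul_assoc]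

open Classical in
/-- The potential of the edge from `a` to `a * y`: a function on the vertices of the Cayley graph
which changes along this edge and along no other. -/
lemma exists_edge_potential {H : Type*} [Group H] (a : FPZ H) :
    ∃ f : FPZ H → ℤ, (∀ g h, f (g * fpzInl H h) = f g) ∧
      ∀ g, f (g * fpzY H) = f g + if g = a then 1 else 0 := by
  refine ⟨fun g => (edgeAction a g⁻¹ (1, 0)).2, fun g h => ?_, fun g => ?_⟩
  · simp only [mul_inv_rev, map_mul, Equiv.Perm.mul_apply, ← map_inv (fpzInl H)]
    rw [edgeAction_inl]
  · have h1 : (edgeAction a g⁻¹ (1, 0)).1 = g⁻¹ := by rw [edgeAction_fst]; simp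
    simp only [mul_inv_rev, map_mul, Equiv.Perm.mul_apply]
    rw [map_inv (edgeAction a) (fpzY H), edgeAction_y, Equiv.Perm.inv_def]
    change _ + (if (edgeAction a g⁻¹ (1, 0)).1 = a⁻¹ then (1 : ℤ) else 0) = _
    rw [h1]
    simp

/-- The three kinds of edges of the Cayley graph, with the identity of the letter in `S`
forgotten. -/
lemma step_cases {H : Type*} [Group H] {S : Set H} {u v : FPZ H}
    (h : u⁻¹ * v ∈ ((⇑(fpzInl H)) '' S ∪ {fpzY H}) ∪ ((⇑(fpzInl H)) '' S ∪ {fpzY H})⁻¹) :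
    (∃ s, v = u * fpzInl H s) ∨ v = u * fpzY H ∨ u = v * fpzY H := by
  rcases h with (⟨s, -, hs⟩ | h) | h
  · exact .inl ⟨s, by rw [hs]; simp⟩
  · exact .inr (.inl (inv_mul_eq_iff_eq_mul.1 h))
  · rw [Set.mem_inv, mul_inv_rev, inv_inv] at h
    rcases h with ⟨s, -, hs⟩ | h
    · exact .inl ⟨s⁻¹, by rw [map_inv, hs]; simp⟩
    · exact .inr (.inr (inv_mul_eq_iff_eq_mul.1 h))

/-- An edge-path in the Cayley graph of `H * ℤ` with respect to
`S ∪ {y}` whose endpoints lie in `H` but which leaves `H` must visit some vertex twice. -/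
theorem path_leaving_factor_revisits_vertex (H : Type*) [Group H] (S : Set H)
    (hS : Subgroup.closure S = ⊤) (n : ℕ) (g : ℕ → FPZ H)
    (hpath : ∀ i < n, (g i)⁻¹ * g (i + 1) ∈
      ((⇑(fpzInl H)) '' S ∪ {fpzY H}) ∪ ((⇑(fpzInl H)) '' S ∪ {fpzY H})⁻¹)
    (h0 : g 0 ∈ (fpzInl H).range) (hn : g n ∈ (fpzInl H).range)
    (hleaves : ∃ j, 0 < j ∧ j < n ∧ g j ∉ (fpzInl H).range) :
    ∃ i k, i < k ∧ k ≤ n ∧ g i = g k := by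
  classical
  -- The first exit from `H` is along the edge from `g i` to `g (i + 1)`.
  obtain ⟨i, hin, hi, hi'⟩ : ∃ i, i + 1 < n ∧ g i ∈ (fpzInl H).range ∧
      g (i + 1) ∉ (fpzInl H).range := by
    by_contra! hcon
    obtain ⟨j, -, hjn, hj⟩ := hleaves
    have : ∀ m, m < n → g m ∈ (fpzInl H).range := by
      intro m
      induction m with
      | zero => exact fun _ => h0
      | succ m ih => exact fun hm => hcon m hm (ih (by omega))
    exact hj (this j hjn)
  -- `a` is the vertex of that edge from which its label reads `y` rather than `y⁻¹`.
  obtain ⟨a, ha⟩ : ∃ a, (g i = a ∧ g (i + 1) = a * fpzY H) ∨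
      (g (i + 1) = a ∧ g i = a * fpzY H) := by
    rcases step_cases (hpath i (by omega)) with ⟨s, hs⟩ | h | h
    · refine absurd ?_ hi'
      rw [hs]
      exact mul_mem hi ⟨s, rfl⟩
    · exact ⟨_, .inl ⟨rfl, h⟩⟩
    · exact ⟨_, .inr ⟨rfl, h⟩⟩
  obtain ⟨f, fH, fy⟩ := exists_edge_potential a
  have fconst : ∀ x ∈ (fpzInl H).range, f x = f 1 := by
    rintro _ ⟨h, rfl⟩
    simpa using fH 1 h
  have fne : f (g (i + 1)) ≠ f 1 := by
    rw [← fconst _ hi]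
    have := fy a
    rw [if_pos rfl] at this
    rcases ha with ⟨h1, h2⟩ | ⟨h1, h2⟩ <;> rw [h1, h2] <;> omega
  by_contra! hinj
  -- Without repeated vertices the edge is never crossed again, so `f` stays constant.
  have hconst : ∀ k, i + 1 ≤ k → k ≤ n → f (g k) = f (g (i + 1)) := by
    intro k hk
    induction k, hk using Nat.le_induction with
    | base => exact fun _ => rfl
    | succ k hk ih =>
      intro hkn
      rw [← ih (by omega)]
      have e1 := hinj i (k + 1) (by omega) hkn
      have e2 := hinj (i + 1) (k + 1) (by omega) hkn
      rcases step_cases (hpath k (by omega)) with ⟨s, hs⟩ | h | h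
      · rw [hs, fH]
      · have hka : g k ≠ a := by
          rintro rfl
          rcases ha with ⟨_, h2⟩ | ⟨_, h2⟩
          · exact e2 (h2.trans h.symm)
          · exact e1 (h2.trans h.symm)
        rw [h, fy, if_neg hka, add_zero]
      · have hka : g (k + 1) ≠ a := by
          rintro rfl
          rcases ha with ⟨h1, _⟩ | ⟨h1, _⟩
          · exact e1 h1
          · exact e2 h1
        rw [h, fy, if_neg hka, add_zero]
  exact fne ((hconst n hin.le le_rfl).symm.trans (fconst _ hn))
end
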